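/- arXiv:2402.03087 — 7 statements merged into one kernel-verified Lean document; each statement's English description precedes it below -/
import Mathlib

section
/- Let (G,s,t,c) be a flow network on a directed graph G=(V,E) with no parallel arcs and such that for every pair of vertices x,y at most one of the arcs xy and yx is in E, and let r be a nonnegative integer with r ≤ Σ_{xt∈E} c(xt). Let H be the undirected graph obtained from G by forgetting the directions of the arcs, with edge weight w({x,y}) = c(xy) for each arc xy of G. Define targets by t(v) = Σ_{xv∈E} c(xv) for every v ∈ V∖{s,t}, t(s) = Σ_{xs∈E} c(xs) + r, and t(t) = Σ_{xt∈E} c(xt) − r. Then the following are equivalent: (1) there is an all-or-nothing flow of value exactly r in G; (2) H has an orientation in which every vertex v has weighted outdegree exactly t(v); (3) H has an orientation in which every vertex v has weighted outdegree at least t(v); (4) H has an orientation in which every vertex v has weighted outdegree at most t(v). -/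
/-!
All-or-Nothing Flow versus Target/Minimum/Maximum Outdegree Orientation.

A flow network is given by a finite vertex type `V`, a set of arcs
`E : Finset (V × V)` (no parallel arcs, no loops, and for each pair of vertices at
most one of the two opposite arcs is present), a positive capacity function `c`,
a source `s` and a sink `t`.  The undirected graph `H` is obtained by forgetting
directions; an orientation of `H` is modelled as a finset `D` of ordered pairs
containing, for each arc of `E`, exactly one of the two orientations of the
corresponding undirected edge.
-/

open Finset

/-- `f` is an all-or-nothing flow on the network `(E, c, s, t)`:
it is zero outside `E`, on each arc it is `0` or the full capacity, and
flow conservation holds at every vertex other than `s` and `t`. -/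
def IsAONFlow {V : Type*} [Fintype V] [DecidableEq V] (E : Finset (V × V))
    (c : V × V → ℕ) (s t : V) (f : V × V → ℕ) : Prop :=
  (∀ e ∈ E, f e = 0 ∨ f e = c e) ∧ (∀ e, e ∉ E → f e = 0) ∧
  (∀ v, v ≠ s → v ≠ t →
    ∑ e ∈ E.filter (fun e => e.2 = v), f e = ∑ e ∈ E.filter (fun e => e.1 = v), f e)

/-- `D` is an orientation of the undirected graph underlying the arc set `E`:
for each arc of `E`, exactly one of the two directions of the corresponding
undirected edge is chosen, and every chosen pair comes from an arc of `E`. -/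
def IsOrientationOf {V : Type*} (E : Finset (V × V)) (D : Finset (V × V)) : Prop :=
  (∀ e ∈ E, (e ∈ D ∧ e.swap ∉ D) ∨ (e.swap ∈ D ∧ e ∉ D)) ∧
  (∀ p ∈ D, p ∈ E ∨ p.swap ∈ E)

/-- The weighted outdegree of `v` in the orientation `D`, where the weight of an
undirected edge is the capacity of the corresponding arc of `E`. -/
def wOutdeg {V : Type*} [DecidableEq V] (E : Finset (V × V)) (c : V × V → ℕ)
    (D : Finset (V × V)) (v : V) : ℕ :=
  ∑ p ∈ D.filter (fun p => p.1 = v), (if p ∈ E then c p else c p.swap)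

/-!
All-or-nothing flows and orientations are both encoded by a set `K ⊆ E`: the flow saturates the
arcs of `K` and vanishes elsewhere, while the orientation keeps the arcs of `K` and reverses all
others. The weighted outdegree of `v` is then the weight of `K` leaving `v` plus the weight of
`E \ K` entering `v`, that is, the total capacity entering `v` plus the net outflow of the flow
at `v`. Hence conservation and the value `r` say precisely that the targets are met away from `t`.
The targets and the outdegrees both sum to the total capacity, which settles `t` as well and turns
a one-sided bound at all vertices into equality.
-/

section Sums

variable {ι M : Type*} [Fintype ι] [AddCancelCommMonoid M] {f g : ι → M}

theorem eq_of_sum_eq_of_forall_ne (hsum : ∑ i, f i = ∑ i, g i) (j : ι)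
    (h : ∀ i, i ≠ j → f i = g i) : f = g := by
  have hj : f j = g j :=
    (sum_eq_sum_iff_single (mem_univ j) fun i _ hi => h i hi).1 hsum
  funext i
  by_cases hi : i = j
  · rw [hi, hj]
  · exact h i hi

theorem sum_eq_sum_of_transfer {i j : ι} {r : M} (hij : i ≠ j) (hi : f i = g i + r)
    (hj : f j + r = g j) (h : ∀ k, k ≠ i → k ≠ j → f k = g k) : ∑ k, f k = ∑ k, g k := by
  classical
  have hshift : ∀ k, f k + (Pi.single j r : ι → M) k = g k + (Pi.single i r : ι → M) k := by
    intro k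
    rcases eq_or_ne k i with rfl | hki
    · simp [hij, hi]
    rcases eq_or_ne k j with rfl | hkj
    · simp [hki, hj]
    · simp [hki, hkj, h k hki hkj]
  have htotal := Fintype.sum_congr _ _ hshift
  simpa only [sum_add_distrib, Fintype.sum_pi_single', add_left_inj] using htotal

end Sums

section Weights

variable {V M : Type*} [DecidableEq V] [AddCommMonoid M]

/-- The total `c`-weight of the arcs of `K` entering `v`. For `K` the whole arc set and `c` a flow,
this is the inflow at `v`. -/
abbrev inWeight (K : Finset (V × V)) (c : V × V → M) (v : V) : M :=
  ∑ e ∈ K.filter (fun e => e.2 = v), c e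

/-- The total `c`-weight of the arcs of `K` leaving `v`. For `K` the whole arc set and `c` a flow,
this is the outflow at `v`. -/
abbrev outWeight (K : Finset (V × V)) (c : V × V → M) (v : V) : M :=
  ∑ e ∈ K.filter (fun e => e.1 = v), c e

theorem sum_filter_indicator {α : Type*} {K E : Finset α} (hK : K ⊆ E) (p : α → Prop)
    [DecidablePred p] (c : α → M) :
    ∑ e ∈ E.filter p, (K : Set α).indicator c e = ∑ e ∈ K.filter p, c e := by
  classical
  refine (sum_indicator_eq_sum_filter _ (fun _ => c) (fun _ => (K : Set α)) id).trans ?_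
  simp only [id, mem_coe, filter_comm p, filter_mem_eq_inter, inter_eq_right.2 hK]

theorem inWeight_sdiff_add_inWeight {K E : Finset (V × V)} (hK : K ⊆ E) (c : V × V → M) (v : V) :
    inWeight (E \ K) c v + inWeight K c v = inWeight E c v := by
  simp only [sum_filter, sum_sdiff hK]

end Weights

section Reorientation

variable {V : Type*} [DecidableEq V] {E K D : Finset (V × V)}

/-- The orientation of the graph underlying `E` that keeps the arcs of `K ⊆ E` and reverses the
other arcs of `E`. -/
def reorient (E K : Finset (V × V)) : Finset (V × V) :=
  K ∪ (E \ K).map (Equiv.prodComm V V).toEmbedding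

theorem mem_reorient {p : V × V} :
    p ∈ reorient E K ↔ p ∈ K ∨ p.swap ∈ E ∧ p.swap ∉ K := by
  rw [reorient, mem_union, mem_map_equiv, mem_sdiff, Equiv.prodComm_symm, Equiv.prodComm_apply]

theorem isOrientationOf_reorient (hanti : ∀ e ∈ E, e.swap ∉ E) (hK : K ⊆ E) :
    IsOrientationOf E (reorient E K) := by
  refine ⟨fun e he => ?_, fun p hp => ?_⟩
  · have hswap : e.swap ∉ E := hanti e he
    have hswapK : e.swap ∉ K := fun h => hswap (hK h)
    simp only [mem_reorient, Prod.swap_swap]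
    tauto
  · exact (mem_reorient.1 hp).imp (fun h => hK h) And.left

theorem IsOrientationOf.reorient_inter_eq (hD : IsOrientationOf E D) :
    reorient E (E ∩ D) = D := by
  ext p
  have hp := hD.1 p
  have hswap := hD.1 p.swap
  have hmem := hD.2 p
  rw [Prod.swap_swap] at hswap
  simp only [mem_reorient, mem_inter]
  tauto

theorem exists_isOrientationOf_iff (hanti : ∀ e ∈ E, e.swap ∉ E) {P : Finset (V × V) → Prop} :
    (∃ D, IsOrientationOf E D ∧ P D) ↔ ∃ K ⊆ E, P (reorient E K) :=
  ⟨fun ⟨D, hD, hP⟩ => ⟨E ∩ D, inter_subset_left, hD.reorient_inter_eq.symm ▸ hP⟩,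
    fun ⟨K, hK, hP⟩ => ⟨reorient E K, isOrientationOf_reorient hanti hK, hP⟩⟩

theorem wOutdeg_reorient (hanti : ∀ e ∈ E, e.swap ∉ E) (hK : K ⊆ E) (c : V × V → ℕ) (v : V) :
    wOutdeg E c (reorient E K) v = outWeight K c v + inWeight (E \ K) c v := by
  have hdisj : Disjoint K ((E \ K).map (Equiv.prodComm V V).toEmbedding) :=
    disjoint_left.2 fun e heK he => hanti e (hK heK) (sdiff_subset (mem_map_equiv.1 he))
  rw [wOutdeg, reorient, filter_union, sum_union (disjoint_filter_filter hdisj), filter_map,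
    sum_map]
  congr 1
  · exact sum_congr rfl fun e he => if_pos (hK (mem_of_mem_filter e he))
  · exact sum_congr rfl fun e he =>
      if_neg (hanti e (sdiff_subset (mem_of_mem_filter e he)))

theorem wOutdeg_reorient_add_inWeight (hanti : ∀ e ∈ E, e.swap ∉ E) (hK : K ⊆ E)
    (c : V × V → ℕ) (v : V) :
    wOutdeg E c (reorient E K) v + inWeight K c v = inWeight E c v + outWeight K c v := by
  rw [wOutdeg_reorient hanti hK, add_assoc, inWeight_sdiff_add_inWeight hK, add_comm]

theorem IsOrientationOf.sum_wOutdeg [Fintype V] (hD : IsOrientationOf E D)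
    (hanti : ∀ e ∈ E, e.swap ∉ E) (c : V × V → ℕ) :
    ∑ v, wOutdeg E c D v = ∑ e ∈ E, c e := by
  have hK : E ∩ D ⊆ E := inter_subset_left
  rw [← hD.reorient_inter_eq]
  simp only [wOutdeg_reorient hanti hK, sum_add_distrib, sum_fiberwise]
  rw [add_comm, sum_sdiff hK]

end Reorientation

section Flow

variable {V : Type*} [Fintype V] [DecidableEq V] {E K : Finset (V × V)} {c f : V × V → ℕ} {s t : V}

theorem isAONFlow_indicator_iff (hK : K ⊆ E) :
    IsAONFlow E c s t ((K : Set (V × V)).indicator c) ↔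
      ∀ v, v ≠ s → v ≠ t → inWeight K c v = outWeight K c v := by
  have hvals : ∀ e ∈ E, (K : Set (V × V)).indicator c e = 0 ∨
      (K : Set (V × V)).indicator c e = c e :=
    fun e _ => Set.indicator_eq_zero_or_self _ c e
  have hsupp : ∀ e, e ∉ E → (K : Set (V × V)).indicator c e = 0 :=
    fun e he => Set.indicator_of_notMem (fun h => he (hK h)) c
  rw [IsAONFlow, and_iff_right hvals, and_iff_right hsupp]
  simp only [sum_filter_indicator hK]

theorem IsAONFlow.indicator_support_eq (hf : IsAONFlow E c s t f) :
    (↑(E.filter (fun e => f e ≠ 0)) : Set (V × V)).indicator c = f := by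
  funext e
  simp only [Set.indicator_apply, mem_coe, mem_filter]
  split_ifs with he
  · exact ((hf.1 e he.1).resolve_left he.2).symm
  · by_cases heE : e ∈ E
    · exact (not_not.1 fun hne => he ⟨heE, hne⟩).symm
    · exact (hf.2.1 e heE).symm

theorem exists_isAONFlow_iff {P : (V × V → ℕ) → Prop} :
    (∃ f, IsAONFlow E c s t f ∧ P f) ↔
      ∃ K ⊆ E, (∀ v, v ≠ s → v ≠ t → inWeight K c v = outWeight K c v) ∧
        P ((K : Set (V × V)).indicator c) := by
  constructor
  · rintro ⟨f, hf, hP⟩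
    refine ⟨E.filter (fun e => f e ≠ 0), filter_subset _ _, ?_, ?_⟩
    · rwa [← isAONFlow_indicator_iff (filter_subset _ _), hf.indicator_support_eq]
    · rwa [hf.indicator_support_eq]
  · rintro ⟨K, hK, hcons, hP⟩
    exact ⟨_, (isAONFlow_indicator_iff hK).2 hcons, hP⟩

theorem exists_isAONFlow_value_iff (r : ℕ) :
    (∃ f, IsAONFlow E c s t f ∧ outWeight E f s = inWeight E f s + r) ↔
      ∃ K ⊆ E, (∀ v, v ≠ s → v ≠ t → inWeight K c v = outWeight K c v) ∧
        outWeight K c s = inWeight K c s + r := by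
  rw [exists_isAONFlow_iff]
  refine exists_congr fun K => and_congr_right fun hK => ?_
  simp only [sum_filter_indicator hK]

theorem wOutdeg_reorient_eq_iff (hanti : ∀ e ∈ E, e.swap ∉ E) (hK : K ⊆ E) {r : ℕ} {tgt : V → ℕ}
    (htgts : tgt s = inWeight E c s + r)
    (htgt : ∀ v, v ≠ s → v ≠ t → tgt v = inWeight E c v)
    (hsum : ∑ v, tgt v = ∑ e ∈ E, c e) :
    (∀ v, wOutdeg E c (reorient E K) v = tgt v) ↔
      (∀ v, v ≠ s → v ≠ t → inWeight K c v = outWeight K c v) ∧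
        outWeight K c s = inWeight K c s + r := by
  have hbal := wOutdeg_reorient_add_inWeight hanti hK c
  constructor
  · refine fun h => ⟨fun v hs ht => ?_, ?_⟩
    · linarith [hbal v, h v, htgt v hs ht]
    · linarith [hbal s, h s]
  · rintro ⟨hcons, hval⟩
    have htotal := (isOrientationOf_reorient hanti hK).sum_wOutdeg hanti c
    refine congrFun (eq_of_sum_eq_of_forall_ne (htotal.trans hsum.symm) t fun v ht => ?_)
    rcases eq_or_ne v s with rfl | hs
    · linarith [hbal v]
    · linarith [hbal v, hcons v hs ht, htgt v hs ht]

end Flow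

theorem aon_flow_iff_orientations {V : Type*} [Fintype V] [DecidableEq V]
    (E : Finset (V × V)) (c : V × V → ℕ) (s t : V) (r : ℕ)
    (hst : s ≠ t)
    (hpos : ∀ e ∈ E, 0 < c e)
    (hloop : ∀ e ∈ E, e.1 ≠ e.2)
    (hanti : ∀ e ∈ E, e.swap ∉ E)
    (hr : r ≤ ∑ e ∈ E.filter (fun e => e.2 = t), c e)
    (tgt : V → ℕ)
    (htgts : tgt s = (∑ e ∈ E.filter (fun e => e.2 = s), c e) + r)
    (htgtt : tgt t = (∑ e ∈ E.filter (fun e => e.2 = t), c e) - r)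
    (htgt : ∀ v, v ≠ s → v ≠ t → tgt v = ∑ e ∈ E.filter (fun e => e.2 = v), c e) :
    [(∃ f, IsAONFlow E c s t f ∧
        ∑ e ∈ E.filter (fun e => e.1 = s), f e = (∑ e ∈ E.filter (fun e => e.2 = s), f e) + r),
     (∃ D, IsOrientationOf E D ∧ ∀ v, wOutdeg E c D v = tgt v),
     (∃ D, IsOrientationOf E D ∧ ∀ v, tgt v ≤ wOutdeg E c D v),
     (∃ D, IsOrientationOf E D ∧ ∀ v, wOutdeg E c D v ≤ tgt v)].TFAE := by
  have hsum : ∑ v, tgt v = ∑ e ∈ E, c e := by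
    rw [sum_eq_sum_of_transfer hst htgts (by rw [htgtt, Nat.sub_add_cancel hr]) htgt,
      sum_fiberwise]
  have htotal {D : Finset (V × V)} (hD : IsOrientationOf E D) :
      ∑ v, wOutdeg E c D v = ∑ v, tgt v :=
    (hD.sum_wOutdeg hanti c).trans hsum.symm
  tfae_have 1 ↔ 2 := by
    rw [exists_isAONFlow_value_iff, exists_isOrientationOf_iff hanti]
    exact exists_congr fun K => and_congr_right fun hK =>
      (wOutdeg_reorient_eq_iff hanti hK htgts htgt hsum).symm
  tfae_have 2 → 3 := fun ⟨D, hD, h⟩ => ⟨D, hD, fun v => (h v).ge⟩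
  tfae_have 2 → 4 := fun ⟨D, hD, h⟩ => ⟨D, hD, fun v => (h v).le⟩
  tfae_have 3 → 2 := fun ⟨D, hD, h⟩ => ⟨D, hD, fun v =>
    ((sum_eq_sum_iff_of_le fun v _ => h v).1 (htotal hD).symm v (mem_univ v)).symm⟩
  tfae_have 4 → 2 := fun ⟨D, hD, h⟩ => ⟨D, hD, fun v =>
    (sum_eq_sum_iff_of_le fun v _ => h v).1 (htotal hD) v (mem_univ v)⟩
  tfae_finish
end

section
/- Fix an integer γ ≥ 3 and consider the directed weighted graph (gadget) with vertices x, y, v_1, …, v_{2γ−4} and the following arcs with capacities: an arc v_i v_{i+1} of capacity 1 for each odd i ∈ {1,…,2γ−5}, an arc v_i v_{i+1} of capacity 2 for each even i ∈ {2,…,2γ−6}, an arc from x to v_1 of capacity 2, an arc from x to v_i of capacity 1 for each even i ∈ {2,…,2γ−4}, an arc from v_i to y of capacity 1 for each odd i ∈ {1,…,2γ−5}, and an arc from v_{2γ−4} to y of capacity 2. Let f assign to each arc e of the gadget a value f(e) ∈ {0, c(e)} such that at every vertex v_i the sum of f over incoming arcs equals the sum of f over outgoing arcs. Then either f(e) =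 0 for every arc of the gadget, or f(e) = c(e) for every arc of the gadget; in particular, the total flow leaving x (and entering y) through the gadget is either 0 or exactly γ. -/
/-!
The capacity-{1,2} gadget replacing an arc of capacity `γ ≥ 3`.

Vertices: `Sum.inr false = x`, `Sum.inr true = y`, and `Sum.inl i` (0-indexed,
`i : Fin (2γ-4)`) is the path vertex `v_{i+1}` of the paper (1-indexed).

Arcs and capacities (`gcap` is `0` exactly on the non-arcs):
* `v_i → v_{i+1}` of capacity 1 for odd (1-indexed) `i`, i.e. even 0-indexed `i`;
* `v_i → v_{i+1}` of capacity 2 for even (1-indexed) `i`;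
* `x → v_1` of capacity 2;
* `x → v_i` of capacity 1 for even (1-indexed) `i`, i.e. odd 0-indexed `i`;
* `v_i → y` of capacity 1 for odd (1-indexed) `i ≤ 2γ-5`;
* `v_{2γ-4} → y` of capacity 2.
-/

/-- Vertex type of the gadget with `n` internal path vertices. -/
abbrev GadgetV (n : ℕ) := Fin n ⊕ Bool

/-- Capacities of the gadget arcs (and `0` on non-arcs). -/
def gcap (γ : ℕ) : GadgetV (2 * γ - 4) × GadgetV (2 * γ - 4) → ℕ := fun e =>
  match e with
  | (Sum.inl i, Sum.inl j) =>
      if (j : ℕ) = (i : ℕ) + 1 then (if (i : ℕ) % 2 = 0 then 1 else 2) else 0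
  | (Sum.inr false, Sum.inl i) =>
      if (i : ℕ) = 0 then 2 else if (i : ℕ) % 2 = 1 then 1 else 0
  | (Sum.inl i, Sum.inr true) =>
      if (i : ℕ) = 2 * γ - 5 then 2 else if (i : ℕ) % 2 = 0 then 1 else 0
  | _ => 0

/-!
Every inner vertex has a single arc of capacity `2` on one side and two arcs of capacity `1` on
the other. A conservative flow that is all-or-nothing on the arcs of capacity `2` therefore
either avoids the vertex or saturates all of its arcs, and the arc `v_i → v_{i+1}` forces
consecutive vertices to make the same choice.
-/

section Network

variable {V M : Type*}

section States

variable [Zero M]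

/-- The flow `f` vanishes on all arcs at the vertex `v`: one of the two states between which
the vertices of the gadget choose. -/
def IdleAt (f : V × V → M) (v : V) : Prop :=
  (∀ u, f (u, v) = 0) ∧ ∀ w, f (v, w) = 0

/-- The flow `f` exhausts the capacities `c` of all arcs at the vertex `v`: the other of the
two states. -/
def SaturatedAt (c f : V × V → M) (v : V) : Prop :=
  (∀ u, f (u, v) = c (u, v)) ∧ ∀ w, f (v, w) = c (v, w)

theorem IdleAt.not_saturatedAt_of_arc {c f : V × V → M} {u v : V} (hu : IdleAt f u)
    (hc : c (u, v) ≠ 0 ∨ c (v, u) ≠ 0) : ¬SaturatedAt c f v := by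
  rintro ⟨hin, hout⟩
  rcases hc with hc | hc
  · exact hc (by rw [← hin, hu.2])
  · exact hc (by rw [← hout, hu.1])

theorem forall_idleAt_or_forall_saturatedAt_of_preconnected {ι : Type*} {G : SimpleGraph ι}
    (hG : G.Preconnected) {c f : V × V → M} {p : ι → V}
    (hadj : ∀ i j, G.Adj i j → c (p i, p j) ≠ 0 ∨ c (p j, p i) ≠ 0)
    (hlocal : ∀ i, IdleAt f (p i) ∨ SaturatedAt c f (p i)) :
    (∀ i, IdleAt f (p i)) ∨ ∀ i, SaturatedAt c f (p i) := by
  by_contra! ⟨⟨i, hi⟩, j, hj⟩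
  have idle_of_walk {k l : ι} (w : G.Walk k l) (hk : IdleAt f (p k)) : IdleAt f (p l) := by
    induction w with
    | nil => exact hk
    | cons h _ ih =>
      exact ih ((hlocal _).resolve_right (hk.not_saturatedAt_of_arc (hadj _ _ h)))
  obtain ⟨w⟩ := hG j i
  exact hi (idle_of_walk w ((hlocal j).resolve_right hj))

theorem forall_eq_zero_or_forall_eq_of_forall_ne [PartialOrder M] {ι : Type*} {a c : ι → M}
    (h0 : ∀ i, 0 ≤ a i) (hle : ∀ i, a i ≤ c i) {i₀ : ι} (hc : ∀ i ≠ i₀, c i = 0)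
    (h : a i₀ = 0 ∨ a i₀ = c i₀) :
    (∀ i, a i = 0) ∨ ∀ i, a i = c i := by
  have hne (i : ι) (hi : i ≠ i₀) : a i = 0 := le_antisymm (hc i hi ▸ hle i) (h0 i)
  refine h.imp (fun h i => ?_) (fun h i => ?_) <;> rcases eq_or_ne i i₀ with rfl | hi
  exacts [h, hne i hi, h, (hne i hi).trans (hc i hi).symm]

end States

section Conservation

variable [Fintype V] [AddCommMonoid M]

/-- Flow conservation at the vertex `v`, the value on the arc from `u` to `w` being `f (u, w)`. -/
def ConservedAt (f : V × V → M) (v : V) : Prop :=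
  ∑ u, f (u, v) = ∑ w, f (v, w)

variable [PartialOrder M] [IsOrderedCancelAddMonoid M]

theorem ConservedAt.in_eq_iff_out_eq {f g : V × V → M} {v : V} (hf : ConservedAt f v)
    (hg : ConservedAt g v) (hle : ∀ e, f e ≤ g e) :
    (∀ u, f (u, v) = g (u, v)) ↔ ∀ w, f (v, w) = g (v, w) := by
  have hin := Finset.sum_eq_sum_iff_of_le fun u (_ : u ∈ Finset.univ) => hle (u, v)
  have hout := Finset.sum_eq_sum_iff_of_le fun w (_ : w ∈ Finset.univ) => hle (v, w)
  simp only [Finset.mem_univ, true_imp_iff] at hin hout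
  rw [← hin, ← hout, hf, hg]

theorem ConservedAt.idleAt_or_saturatedAt {c f : V × V → M} {v : V} (hf : ConservedAt f v)
    (hc : ConservedAt c v) (h0 : ∀ e, 0 ≤ f e) (hle : ∀ e, f e ≤ c e)
    (hside : ((∀ u, f (u, v) = 0) ∨ ∀ u, f (u, v) = c (u, v)) ∨
      ((∀ w, f (v, w) = 0) ∨ ∀ w, f (v, w) = c (v, w))) :
    IdleAt f v ∨ SaturatedAt c f v := by
  have hzero : ConservedAt (0 : V × V → M) v := by simp [ConservedAt]
  have idle_iff : (∀ u, f (u, v) = 0) ↔ ∀ w, f (v, w) = 0 := by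
    simpa [eq_comm] using hzero.in_eq_iff_out_eq hf h0
  have sat_iff := hf.in_eq_iff_out_eq hc hle
  rcases hside with (h | h) | h | h
  exacts [.inl ⟨h, idle_iff.1 h⟩, .inr ⟨h, sat_iff.1 h⟩,
    .inl ⟨idle_iff.2 h, h⟩, .inr ⟨sat_iff.2 h, h⟩]

end Conservation

end Network

section Gadget

variable {γ : ℕ}

/-- The involution of the vertices exchanging `x` with `y` and reversing the path, under which
the gadget with all arcs reversed is the gadget itself. -/
def gadgetRev {n : ℕ} : GadgetV n ≃ GadgetV n :=
  Equiv.sumCongr Fin.revPerm Equiv.boolNot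

theorem gadgetRev_inl {n : ℕ} (i : Fin n) : gadgetRev (.inl i) = .inl i.rev := rfl

theorem gcap_gadgetRev (u w : GadgetV (2 * γ - 4)) :
    gcap γ (gadgetRev w, gadgetRev u) = gcap γ (u, w) := by
  rcases u with i | _ | _ <;> rcases w with j | _ | _ <;>
    simp only [gadgetRev, gcap, Equiv.sumCongr_apply, Sum.map_inl, Sum.map_inr, Fin.revPerm_apply,
      Fin.val_rev, Equiv.boolNot_apply, Bool.not_true, Bool.not_false] <;>
    grind

theorem sum_gcap_gadgetRev (v : GadgetV (2 * γ - 4)) :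
    ∑ w, gcap γ (gadgetRev v, w) = ∑ u, gcap γ (u, v) := by
  simp_rw [← Equiv.sum_comp gadgetRev (fun w => gcap γ (gadgetRev v, w)), gcap_gadgetRev]

theorem exists_gcap_in_eq_single {i : Fin (2 * γ - 4)} (hi : (i : ℕ) % 2 = 0) :
    ∃ u₀, (fun u => gcap γ (u, .inl i)) = Pi.single u₀ 2 := by
  by_cases h : (i : ℕ) = 0
  · refine ⟨.inr false, ?_⟩
    ext (j | _ | _) <;> simp [gcap, h]
  · refine ⟨.inl ⟨i - 1, by omega⟩, ?_⟩
    ext (j | _ | _) <;> grind [gcap]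

theorem exists_gcap_out_eq_single {i : Fin (2 * γ - 4)} (hi : (i : ℕ) % 2 = 1) :
    ∃ w₀, (fun w => gcap γ (.inl i, w)) = Pi.single w₀ 2 := by
  obtain ⟨u₀, hu₀⟩ := exists_gcap_in_eq_single (i := i.rev) (by grind)
  refine ⟨gadgetRev.symm u₀, funext fun w => ?_⟩
  rw [← gcap_gadgetRev]
  simpa [gadgetRev_inl, Pi.single_apply, Equiv.eq_symm_apply] using congrFun hu₀ (gadgetRev w)

theorem sum_gcap_in (i : Fin (2 * γ - 4)) : ∑ u, gcap γ (u, .inl i) = 2 := by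
  rcases Nat.mod_two_eq_zero_or_one i with hi | hi
  · obtain ⟨u₀, hu₀⟩ := exists_gcap_in_eq_single hi
    simp [hu₀]
  · have h : (fun u => gcap γ (u, .inl i)) =
        Pi.single (.inl ⟨i - 1, by omega⟩) 1 + Pi.single (.inr false) 1 := by
      ext (j | _ | _) <;> grind [gcap, Pi.add_apply]
    simp [h, Finset.sum_add_distrib, -Fintype.sum_sum_type]

theorem sum_gcap_out (i : Fin (2 * γ - 4)) : ∑ w, gcap γ (.inl i, w) = 2 := by
  rw [← i.rev_rev, ← gadgetRev_inl, sum_gcap_gadgetRev, sum_gcap_in]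

theorem sum_range_two_mul_mod_two (m : ℕ) : ∑ i ∈ Finset.range (2 * m), i % 2 = m := by
  induction m with
  | zero => rfl
  | succ m ih =>
    rw [mul_add_one, Finset.sum_range_succ, Finset.sum_range_succ, ih]
    omega

theorem sum_gcap_source (hγ : 3 ≤ γ) : ∑ u, gcap γ (.inr false, u) = γ := by
  have hcap (i : Fin (2 * γ - 4)) :
      gcap γ (.inr false, .inl i) = (i : ℕ) % 2 + if i = ⟨0, by omega⟩ then 2 else 0 := by
    grind [gcap]
  have hodd : ∑ i : Fin (2 * γ - 4), (i : ℕ) % 2 = γ - 2 := by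
    rw [Fin.sum_univ_eq_sum_range (· % 2), ← sum_range_two_mul_mod_two (γ - 2)]
    congr 2
    omega
  have hbool (b : Bool) : gcap γ (.inr false, .inr b) = 0 := rfl
  simp only [Fintype.sum_sum_type, hcap, Finset.sum_add_distrib, hodd, hbool,
    Finset.sum_ite_eq', Finset.mem_univ, if_true, Finset.sum_const_zero]
  omega

theorem sum_gcap_sink (hγ : 3 ≤ γ) : ∑ u, gcap γ (u, .inr true) = γ := by
  rw [← sum_gcap_gadgetRev]
  exact sum_gcap_source hγ

theorem gcap_ne_zero_of_pathGraph_adj {i j : Fin (2 * γ - 4)}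
    (h : (SimpleGraph.pathGraph _).Adj i j) :
    gcap γ (.inl i, .inl j) ≠ 0 ∨ gcap γ (.inl j, .inl i) ≠ 0 := by
  rw [SimpleGraph.pathGraph_adj] at h
  grind [gcap]

variable {R : Type*} [AddCommMonoidWithOne R] {f : GadgetV (2 * γ - 4) × GadgetV (2 * γ - 4) → R}

theorem conservedAt_gcap (i : Fin (2 * γ - 4)) :
    ConservedAt (fun e => (gcap γ e : R)) (.inl i) := by
  simp only [ConservedAt, ← Nat.cast_sum, sum_gcap_in, sum_gcap_out]

variable [PartialOrder R] [IsOrderedCancelAddMonoid R]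

theorem idleAt_or_saturatedAt_gadget (h0 : ∀ e, 0 ≤ f e) (hle : ∀ e, f e ≤ gcap γ e)
    (haon : ∀ e, gcap γ e = 2 → f e = 0 ∨ f e = 2) {i : Fin (2 * γ - 4)}
    (hcons : ConservedAt f (.inl i)) :
    IdleAt f (.inl i) ∨ SaturatedAt (fun e => (gcap γ e : R)) f (.inl i) := by
  refine hcons.idleAt_or_saturatedAt (conservedAt_gcap i) h0 hle ?_
  rcases Nat.mod_two_eq_zero_or_one i with hi | hi
  · obtain ⟨u₀, hu₀⟩ := exists_gcap_in_eq_single hi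
    replace hu₀ := congrFun hu₀
    refine .inl (forall_eq_zero_or_forall_eq_of_forall_ne (fun _ => h0 _) (fun _ => hle _)
      (i₀ := u₀) (fun u hu => ?_) ?_)
    · simp [hu₀, hu]
    · simpa [hu₀] using haon _ ((hu₀ u₀).trans (Pi.single_eq_same ..))
  · obtain ⟨w₀, hw₀⟩ := exists_gcap_out_eq_single hi
    replace hw₀ := congrFun hw₀
    refine .inr (forall_eq_zero_or_forall_eq_of_forall_ne (fun _ => h0 _) (fun _ => hle _)
      (i₀ := w₀) (fun w hw => ?_) ?_)
    · simp [hw₀, hw]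
    · simpa [hw₀] using haon _ ((hw₀ w₀).trans (Pi.single_eq_same ..))

theorem forall_eq_zero_or_forall_eq_gcap [CharZero R] (h0 : ∀ e, 0 ≤ f e)
    (hle : ∀ e, f e ≤ gcap γ e) (haon : ∀ e, gcap γ e = 2 → f e = 0 ∨ f e = 2)
    (hcons : ∀ i, ConservedAt f (.inl i)) :
    (∀ e, f e = 0) ∨ ∀ e, f e = gcap γ e := by
  have hterminal (a b : Bool) : gcap γ (.inr a, .inr b) = 0 := by simp [gcap]
  have hf (a b : Bool) : f (.inr a, .inr b) = 0 :=
    le_antisymm (by simpa [hterminal] using hle (.inr a, .inr b)) (h0 _)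
  have hadj (i j : Fin (2 * γ - 4)) (h : (SimpleGraph.pathGraph _).Adj i j) :
      (gcap γ (.inl i, .inl j) : R) ≠ 0 ∨ (gcap γ (.inl j, .inl i) : R) ≠ 0 := by
    exact_mod_cast gcap_ne_zero_of_pathGraph_adj h
  have hlocal (i : Fin (2 * γ - 4)) := idleAt_or_saturatedAt_gadget h0 hle haon (hcons i)
  rcases forall_idleAt_or_forall_saturatedAt_of_preconnected
    (SimpleGraph.pathGraph_preconnected _) hadj hlocal with h | h
  · left
    rintro ⟨i | a, j | b⟩
    exacts [(h i).2 _, (h i).2 _, (h j).1 _, hf a b]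
  · right
    rintro ⟨i | a, j | b⟩
    exacts [(h i).2 _, (h i).2 _, (h j).1 _, by simp [hf, hterminal]]

end Gadget

theorem gadget_all_or_nothing_general {R : Type*} [AddCommMonoidWithOne R] [PartialOrder R]
    [IsOrderedCancelAddMonoid R] [CharZero R] {γ : ℕ} (hγ : 3 ≤ γ)
    {f : GadgetV (2 * γ - 4) × GadgetV (2 * γ - 4) → R}
    (h0 : ∀ e, 0 ≤ f e) (hle : ∀ e, f e ≤ gcap γ e)
    (haon : ∀ e, gcap γ e = 2 → f e = 0 ∨ f e = 2)
    (hcons : ∀ i, ConservedAt f (.inl i)) :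
    ((∀ e, f e = 0) ∨ ∀ e, f e = gcap γ e) ∧
    ((∑ u, f (.inr false, u) = 0 ∧ ∑ u, f (u, .inr true) = 0) ∨
      (∑ u, f (.inr false, u) = γ ∧ ∑ u, f (u, .inr true) = γ)) := by
  have key := forall_eq_zero_or_forall_eq_gcap h0 hle haon hcons
  refine ⟨key, key.imp (fun h => ?_) (fun h => ?_)⟩
  · simp only [h, Finset.sum_const_zero, and_self]
  · simp only [h, ← Nat.cast_sum, sum_gcap_source hγ, sum_gcap_sink hγ, and_self]

theorem gadget_all_or_nothing (γ : ℕ) (hγ : 3 ≤ γ)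
    (f : GadgetV (2 * γ - 4) × GadgetV (2 * γ - 4) → ℕ)
    (haon : ∀ e, f e = 0 ∨ f e = gcap γ e)
    (hcons : ∀ i : Fin (2 * γ - 4),
      ∑ u : GadgetV (2 * γ - 4), f (u, Sum.inl i) =
      ∑ u : GadgetV (2 * γ - 4), f (Sum.inl i, u)) :
    ((∀ e, f e = 0) ∨ (∀ e, f e = gcap γ e)) ∧
    ((∑ u : GadgetV (2 * γ - 4), f (Sum.inr false, u) = 0 ∧
      ∑ u : GadgetV (2 * γ - 4), f (u, Sum.inr true) = 0) ∨
     (∑ u : GadgetV (2 * γ - 4), f (Sum.inr false, u) = γ ∧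
      ∑ u : GadgetV (2 * γ - 4), f (u, Sum.inr true) = γ)) := by
  exact gadget_all_or_nothing_general hγ (fun _ => Nat.zero_le _)
    (fun e => by rcases haon e with h | h <;> simp [h]) (fun e he => he ▸ haon e) hcons
end

section
/- Let G=(V,E) be an undirected graph with a positive integer weight w(e) on each edge and a positive integer target t(v) for each vertex. Construct a graph H as follows: start from the vertex set V; for each edge e = {x,y} of weight γ = w(e), add three new vertices a_e, b_e, c_e forming a triangle, add γ new paths of three vertices each in which the first vertex is additionally adjacent to x and the third vertex is additionally adjacent to a_e, and add γ new paths of three vertices each in which the first vertex is additionally adjacent to b_e and the third vertex is additionally adjacent to y (all gadget vertices for distinct edges are distinct and new). Define f by f(u) = 1 for every new vertex u and f(v) = t(v) for every original vertex v ∈ V. Then H has an f-dominating set of size at most Σ_{e∈E} (2·w(e)+1) if and only if G has an orientation in which every vertex v has weighted outdegree at least t(v). -/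
/-!
The `f`-Dominating Set gadget construction.

The input graph `G` is given by a finite vertex type `V` and an arc set
`A : Finset (V × V)` listing each undirected edge exactly once as an ordered pair
(loopless, and never both orientations), with positive weights `w` and positive
targets `t`.

The graph `H` has vertex type `FDomV V`: original vertices `Sum.inl x`, and for
each edge `e = (x,y)` the gadget vertices `Sum.inr (e, g)` where `g` is either a
triangle vertex (`Sum.inl 0 = a_e`, `Sum.inl 1 = b_e`, `Sum.inl 2 = c_e`) or a
path vertex `Sum.inr (side, j, pos)`: position `pos : Fin 3` of the `j`-th
three-vertex path on side `side` (`false` = the `x`-side paths whose first vertex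
is adjacent to `x` and third vertex is adjacent to `a_e`; `true` = the `y`-side
paths whose first vertex is adjacent to `b_e` and third vertex is adjacent to `y`).
The vertex set of `H` is `fdomVset A w` (path indices `j < w e`).

An orientation of `G` is a function `o : V × V → Bool`; `o e = true` means edge
`e` is directed from `e.1` to `e.2`.
-/

open Finset

/-- Gadget vertices for one edge. -/
abbrev FDomGad := Fin 3 ⊕ (Bool × ℕ × Fin 3)

/-- Vertices of the constructed graph `H`. -/
abbrev FDomV (V : Type*) := V ⊕ ((V × V) × FDomGad)

/-- Adjacency within one edge gadget (base relation, to be symmetrised). -/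
def fdomGadAdj : FDomGad → FDomGad → Prop
  | Sum.inl i, Sum.inl i' => i ≠ i'
  | Sum.inl i, Sum.inr (s, _, p) =>
      (i = 0 ∧ s = false ∧ (p : ℕ) = 2) ∨ (i = 1 ∧ s = true ∧ (p : ℕ) = 0)
  | Sum.inr (s, j, p), Sum.inr (s', j', p') => s = s' ∧ j = j' ∧ (p' : ℕ) = (p : ℕ) + 1
  | _, _ => False

/-- Base adjacency relation of `H` (to be symmetrised). -/
def fdomBase {V : Type*} : FDomV V → FDomV V → Prop
  | Sum.inl x, Sum.inr (e, Sum.inr (false, _, p)) => x = e.1 ∧ (p : ℕ) = 0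
  | Sum.inl y, Sum.inr (e, Sum.inr (true, _, p)) => y = e.2 ∧ (p : ℕ) = 2
  | Sum.inr (e, g), Sum.inr (e', g') => e = e' ∧ fdomGadAdj g g'
  | _, _ => False

/-- Adjacency in `H`. -/
def fdomAdj {V : Type*} (u v : FDomV V) : Prop := fdomBase u v ∨ fdomBase v u

/-- The vertex set of `H`. -/
def fdomVset {V : Type*} (A : Finset (V × V)) (w : V × V → ℕ) : Set (FDomV V) :=
  {u | match u with
       | Sum.inl _ => True
       | Sum.inr (e, Sum.inl _) => e ∈ A
       | Sum.inr (e, Sum.inr (_, j, _)) => e ∈ A ∧ j < w e}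

/-- The demand function of `H`: `t` on original vertices, `1` on gadget vertices. -/
def fdomDemand {V : Type*} (t : V → ℕ) : FDomV V → ℕ
  | Sum.inl x => t x
  | Sum.inr _ => 1

/-!
The triangle of each edge and its `2 * w e` paths are disjoint cells, each containing the closed
neighbourhood of its centre (`c_e`, respectively the middle vertex of the path). A dominating set
meets every cell, so within the budget `∑ e ∈ A, (2 * w e + 1)` it consists of exactly one vertex
per cell and contains no original vertex. If the vertex chosen on a path is the end adjacent to an
original vertex, then the other end must be dominated by its triangle neighbour. Only one triangle
vertex is chosen, so the gadget of `e` helps at most one endpoint of `e`, and by at most `w e`.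
Direct each `e` out of that endpoint: the number of chosen neighbours of any original vertex is then
at most its weighted outdegree. Conversely, an orientation prescribes a choice attaining this bound.
-/

section Domination

variable {U : Type*} {adj : U → U → Prop} {W S : Set U} {f : U → ℕ}

/-- `S` is an `f`-dominating set of the graph with vertex set `W` and adjacency relation `adj`.
Neighbours in `S` are counted with `Set.ncard`, which is `0` when there are infinitely many. -/
def IsFDominating (adj : U → U → Prop) (W : Set U) (f : U → ℕ) (S : Set U) : Prop :=
  ∀ v ∈ W, v ∉ S → f v ≤ (S ∩ {u | adj v u}).ncard

theorem IsFDominating.exists_adj (hS : IsFDominating adj W f S) {v : U} (hv : v ∈ W)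
    (hvS : v ∉ S) (hf : 0 < f v) : ∃ u ∈ S, adj v u :=
  Set.nonempty_of_ncard_ne_zero (hf.trans_le (hS v hv hvS)).ne'

end Domination

theorem bijOn_of_surjOn_of_ncard_le {α β : Type*} {f : α → β} {s : Set α} {t : Set β}
    (hs : s.Finite) (hf : Set.SurjOn f s t) (hst : s.ncard ≤ t.ncard) : Set.BijOn f s t := by
  have himage : t = f '' s :=
    Set.eq_of_subset_of_ncard_le hf ((Set.ncard_image_le hs).trans hst) (hs.image f)
  have hcard : (f '' s).ncard = s.ncard :=
    (Set.ncard_image_le hs).antisymm (himage ▸ hst)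
  exact ⟨Set.mapsTo_iff_image_subset.2 himage.ge, Set.injOn_of_ncard_image_eq hcard hs, hf⟩

section Gadget

variable {V : Type*}

namespace FDomV

/-- The triangle vertices of the gadget of `e`: `a_e`, `b_e`, `c_e` for `i = 0, 1, 2`. -/
abbrev tri (e : V × V) (i : Fin 3) : FDomV V := Sum.inr (e, Sum.inl i)

/-- The vertex at position `p` of the `j`-th path on side `s` of the gadget of `e`. -/
abbrev path (e : V × V) (s : Bool) (j : ℕ) (p : Fin 3) : FDomV V := Sum.inr (e, Sum.inr (s, j, p))

end FDomV

open FDomV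

/-- The endpoint of `e` to which the paths on side `s` are attached. -/
def fdomEnd (e : V × V) (s : Bool) : V := if s then e.2 else e.1

/-- The index of the triangle vertex to which the paths on side `s` are attached. -/
def fdomCorner (s : Bool) : Fin 3 := if s then 1 else 0

/-- The position, on a path of side `s`, of the vertex adjacent to `fdomEnd e s`. -/
def fdomOuter (s : Bool) : Fin 3 := if s then 2 else 0

/-- The position, on a path of side `s`, of the vertex adjacent to the triangle. -/
def fdomInner (s : Bool) : Fin 3 := if s then 0 else 2

theorem fdomCorner_injective : Function.Injective fdomCorner := by decide

theorem fdomCorner_ne_two (s : Bool) : fdomCorner s ≠ 2 := by decide +revert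

theorem fdomOuter_ne_one (s : Bool) : fdomOuter s ≠ 1 := by decide +revert

theorem fdomInner_ne_one (s : Bool) : fdomInner s ≠ 1 := by decide +revert

theorem fdomInner_ne_fdomOuter (s : Bool) : fdomInner s ≠ fdomOuter s := by decide +revert

theorem eq_fdomInner_of_ne (s : Bool) (p : Fin 3) (hmid : p ≠ 1) (hout : p ≠ fdomOuter s) :
    p = fdomInner s := by
  decide +revert

section Adjacency

variable {e e' : V × V} {s s' : Bool} {j j' : ℕ} {i i' p p' : Fin 3} {x y : V}

theorem fdomAdj_comm {u v : FDomV V} : fdomAdj u v ↔ fdomAdj v u := or_comm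

theorem not_fdomAdj_inl_inl : ¬ fdomAdj (Sum.inl x) (Sum.inl y) := by
  simp [fdomAdj, fdomBase]

theorem not_fdomAdj_inl_tri : ¬ fdomAdj (Sum.inl x) (tri e i) := by
  simp [fdomAdj, fdomBase]

theorem fdomAdj_inl_path :
    fdomAdj (Sum.inl x) (path e s j p) ↔ x = fdomEnd e s ∧ p = fdomOuter s := by
  have htwo : (p : ℕ) = 2 ↔ p = 2 := (Fin.ext_iff (b := 2)).symm
  cases s <;> simp [fdomAdj, fdomBase, fdomEnd, fdomOuter, htwo]

theorem fdomAdj_tri_tri : fdomAdj (tri e i) (tri e' i') ↔ e = e' ∧ i ≠ i' := by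
  simp only [fdomAdj, fdomBase, fdomGadAdj]
  grind

theorem fdomAdj_tri_path :
    fdomAdj (tri e i) (path e' s j p) ↔ e = e' ∧ i = fdomCorner s ∧ p = fdomInner s := by
  have htwo : (p : ℕ) = 2 ↔ p = 2 := (Fin.ext_iff (b := 2)).symm
  cases s <;> simp [fdomAdj, fdomBase, fdomGadAdj, fdomCorner, fdomInner, htwo]

theorem fin_three_consecutive_iff (p p' : Fin 3) :
    ((p' : ℕ) = p + 1 ∨ (p : ℕ) = p' + 1) ↔ (p = 1 ↔ p' ≠ 1) := by
  decide +revert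

theorem fdomAdj_path_path :
    fdomAdj (path e s j p) (path e' s' j' p') ↔
      e = e' ∧ s = s' ∧ j = j' ∧ (p = 1 ↔ p' ≠ 1) := by
  simp only [fdomAdj, fdomBase, fdomGadAdj, ← fin_three_consecutive_iff]
  grind

end Adjacency

section Transversal

variable {A : Finset (V × V)} {w : V × V → ℕ}

/-- The set containing one vertex of each cell (triangle or path) of `H`: the vertex with index
`c e` from the triangle of `e`, and the vertex at position `q e s` from each path on side `s` of
`e`. -/
def fdomTransversal (A : Finset (V × V)) (w : V × V → ℕ) (c : V × V → Fin 3)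
    (q : V × V → Bool → Fin 3) : Finset (FDomV V) :=
  (A.sigma fun e => ({c e} : Finset (Fin 3)).disjSum <|
    (univ ×ˢ range (w e)).map
      ⟨fun x : Bool × ℕ => (x.1, x.2, q e x.1),
        Function.LeftInverse.injective (g := fun x => (x.1, x.2.1)) fun _ => rfl⟩).map <|
    (Equiv.sigmaEquivProd (V × V) FDomGad).toEmbedding.trans Function.Embedding.inr

variable {c : V × V → Fin 3} {q : V × V → Bool → Fin 3}

theorem card_fdomTransversal :
    (fdomTransversal A w c q).card = ∑ e ∈ A, (2 * w e + 1) := by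
  simp [fdomTransversal, add_comm]

theorem inl_notMem_fdomTransversal {x : V} : Sum.inl x ∉ fdomTransversal A w c q := by
  simp [fdomTransversal]

theorem tri_mem_fdomTransversal {e : V × V} {i : Fin 3} :
    tri e i ∈ fdomTransversal A w c q ↔ e ∈ A ∧ i = c e := by
  simp [fdomTransversal]

theorem path_mem_fdomTransversal {e : V × V} {s : Bool} {j : ℕ} {p : Fin 3} :
    path e s j p ∈ fdomTransversal A w c q ↔ e ∈ A ∧ j < w e ∧ p = q e s := by
  cases s <;> simp [fdomTransversal, @eq_comm _ p]

theorem fdomTransversal_subset_fdomVset : ↑(fdomTransversal A w c q) ⊆ fdomVset A w := by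
  rintro (x | ⟨e, i | ⟨s, j, p⟩⟩) hu
  · trivial
  · exact (tri_mem_fdomTransversal.1 hu).1
  · exact (path_mem_fdomTransversal.1 hu).imp_right And.left

theorem finite_fdomVset [Finite V] (A : Finset (V × V)) (w : V × V → ℕ) :
    (fdomVset A w).Finite := by
  have hcover : fdomVset A w ⊆ Set.range Sum.inl ∪
      ⋃ k : Fin 3, ↑(fdomTransversal A w (fun _ => k) fun _ _ => k) := by
    rintro (x | ⟨e, i | ⟨s, j, p⟩⟩) hu
    · exact .inl ⟨x, rfl⟩
    · exact .inr (Set.mem_iUnion.2 ⟨i, tri_mem_fdomTransversal.2 ⟨hu, rfl⟩⟩)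
    · exact .inr (Set.mem_iUnion.2 ⟨p, path_mem_fdomTransversal.2 ⟨hu.1, hu.2, rfl⟩⟩)
  exact ((Set.finite_range _).union (Set.finite_iUnion fun _ => finite_toSet _)).subset hcover

end Transversal

section OutPorts

variable [DecidableEq V] {A : Finset (V × V)} {w : V × V → ℕ} {o : V × V → Bool} {v : V}

/-- The edges directed out of `v` by the orientation `o`. -/
def fdomOutEdges (A : Finset (V × V)) (o : V × V → Bool) (v : V) : Finset (V × V) :=
  A.filter fun e => (e.1 = v ∧ o e = true) ∨ (e.2 = v ∧ o e = false)

theorem mem_fdomOutEdges {e : V × V} :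
    e ∈ fdomOutEdges A o v ↔ e ∈ A ∧ v = fdomEnd e (!o e) := by
  cases ho : o e <;> simp [fdomOutEdges, fdomEnd, ho, @eq_comm _ v]

/-- The neighbours of `v` in `H` on the paths of the edges directed out of `v`. Since `o e = true`
directs `e` out of `e.1`, the tail of `e` is on side `!o e` of its gadget. -/
def fdomOutPorts (A : Finset (V × V)) (w : V × V → ℕ) (o : V × V → Bool) (v : V) :
    Finset (FDomV V) :=
  ((fdomOutEdges A o v).sigma fun e => range (w e)).image fun x =>
    path x.1 (!o x.1) x.2 (fdomOuter (!o x.1))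

theorem card_fdomOutPorts : (fdomOutPorts A w o v).card = ∑ e ∈ fdomOutEdges A o v, w e := by
  rw [fdomOutPorts, card_image_of_injective, card_sigma]
  · simp only [card_range]
  · intro x y h
    simp only [Sum.inr.injEq, Prod.mk.injEq] at h
    exact Sigma.ext h.1 (heq_of_eq h.2.2.1)

theorem mem_fdomOutPorts {u : FDomV V} :
    u ∈ fdomOutPorts A w o v ↔ ∃ e ∈ A, v = fdomEnd e (!o e) ∧
      ∃ j < w e, path e (!o e) j (fdomOuter (!o e)) = u := by
  simp [fdomOutPorts, mem_fdomOutEdges, and_assoc]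

end OutPorts

section OrientationOfDominating

variable {A : Finset (V × V)} {w : V × V → ℕ} {t : V → ℕ} {S : Set (FDomV V)}

/-- The vertex of the cell of `u` whose closed neighbourhood lies in that cell: `c_e` for a
triangle, the middle vertex for a path. Original vertices lie in no cell and are fixed. -/
def fdomCentre : FDomV V → FDomV V
  | Sum.inl x => Sum.inl x
  | Sum.inr (e, Sum.inl _) => tri e 2
  | Sum.inr (e, Sum.inr (s, j, _)) => path e s j 1

/-- The set of centres of all cells of `H`. -/
def fdomCentres (A : Finset (V × V)) (w : V × V → ℕ) : Finset (FDomV V) :=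
  fdomTransversal A w (fun _ => 2) fun _ _ => 1

theorem fdomCentre_eq_self {c : FDomV V} (hc : c ∈ fdomCentres A w) : fdomCentre c = c := by
  rcases c with x | ⟨e, i | ⟨s, j, p⟩⟩
  · rfl
  · rw [(tri_mem_fdomTransversal.1 hc).2, fdomCentre]
  · rw [(path_mem_fdomTransversal.1 hc).2.2, fdomCentre]

theorem fdomCentre_eq_of_fdomAdj {c u : FDomV V} (hc : c ∈ fdomCentres A w)
    (hcu : fdomAdj c u) : fdomCentre u = c := by
  rcases c with x | ⟨e, i | ⟨s, j, p⟩⟩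
  · exact (inl_notMem_fdomTransversal hc).elim
  · obtain rfl : i = 2 := (tri_mem_fdomTransversal.1 hc).2
    rcases u with x | ⟨e', i' | ⟨s', j', p'⟩⟩
    · exact (not_fdomAdj_inl_tri (fdomAdj_comm.1 hcu)).elim
    · rw [(fdomAdj_tri_tri.1 hcu).1, fdomCentre]
    · exact (fdomCorner_ne_two s' (fdomAdj_tri_path.1 hcu).2.1.symm).elim
  · obtain rfl : p = 1 := (path_mem_fdomTransversal.1 hc).2.2
    rcases u with x | ⟨e', i' | ⟨s', j', p'⟩⟩
    · exact (fdomOuter_ne_one s (fdomAdj_inl_path.1 (fdomAdj_comm.1 hcu)).2.symm).elim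
    · exact (fdomInner_ne_one s (fdomAdj_tri_path.1 (fdomAdj_comm.1 hcu)).2.2.symm).elim
    · obtain ⟨rfl, rfl, rfl, -⟩ := fdomAdj_path_path.1 hcu
      rfl

theorem surjOn_fdomCentre (hdom : IsFDominating fdomAdj (fdomVset A w) (fdomDemand t) S) :
    Set.SurjOn fdomCentre S (fdomCentres A w) := by
  intro c hc
  by_cases hcS : c ∈ S
  · exact ⟨c, hcS, fdomCentre_eq_self hc⟩
  have hpos : 0 < fdomDemand t c := by
    rcases c with x | g
    · exact (inl_notMem_fdomTransversal hc).elim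
    · exact one_pos
  obtain ⟨u, huS, hcu⟩ := hdom.exists_adj (fdomTransversal_subset_fdomVset hc) hcS hpos
  exact ⟨u, huS, fdomCentre_eq_of_fdomAdj hc hcu⟩

theorem bijOn_fdomCentre (hfin : S.Finite) (hcard : S.ncard ≤ ∑ e ∈ A, (2 * w e + 1))
    (hdom : IsFDominating fdomAdj (fdomVset A w) (fdomDemand t) S) :
    Set.BijOn fdomCentre S (fdomCentres A w) := by
  refine bijOn_of_surjOn_of_ncard_le hfin (surjOn_fdomCentre hdom) ?_
  rwa [Set.ncard_coe_finset, fdomCentres, card_fdomTransversal]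

theorem inl_notMem_of_mapsTo (hmaps : Set.MapsTo fdomCentre S (fdomCentres A w)) (x : V) :
    Sum.inl x ∉ S :=
  fun hx => inl_notMem_fdomTransversal (hmaps hx)

theorem tri_corner_mem_of_path_outer_mem (hsub : S ⊆ fdomVset A w)
    (hdom : IsFDominating fdomAdj (fdomVset A w) (fdomDemand t) S)
    (hinj : Set.InjOn fdomCentre S) {e : V × V} {s : Bool} {j : ℕ}
    (houter : path e s j (fdomOuter s) ∈ S) : tri e (fdomCorner s) ∈ S := by
  have hunique {p : Fin 3} (hp : path e s j p ∈ S) : p = fdomOuter s := by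
    simpa using hinj hp houter rfl
  have hinner : path e s j (fdomInner s) ∉ S := fun h => fdomInner_ne_fdomOuter s (hunique h)
  have hmem : e ∈ A ∧ j < w e := hsub houter
  obtain ⟨u, huS, hu⟩ := hdom.exists_adj hmem hinner one_pos
  rcases u with x | ⟨e', i | ⟨s', j', p⟩⟩
  · exact (fdomInner_ne_fdomOuter s (fdomAdj_inl_path.1 (fdomAdj_comm.1 hu)).2).elim
  · obtain ⟨rfl, rfl, -⟩ := fdomAdj_tri_path.1 (fdomAdj_comm.1 hu)
    exact huS
  · obtain ⟨rfl, rfl, rfl, hp⟩ := fdomAdj_path_path.1 hu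
    obtain rfl : p = 1 := by simpa [fdomInner_ne_one] using hp
    exact (fdomOuter_ne_one s (hunique huS).symm).elim

open scoped Classical in
/-- The orientation read off a dominating set: `e` is directed out of `e.1` if `a_e` is chosen. -/
noncomputable def fdomOrientation (S : Set (FDomV V)) (e : V × V) : Bool :=
  decide (tri e (fdomCorner false) ∈ S)

theorem eq_not_fdomOrientation (hinj : Set.InjOn fdomCentre S) {e : V × V} {s : Bool}
    (hs : tri e (fdomCorner s) ∈ S) : s = !fdomOrientation S e := by
  cases s with
  | false => simp [fdomOrientation, hs]
  | true =>
    have hfalse : tri e (fdomCorner false) ∉ S := fun h =>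
      absurd (fdomCorner_injective (by simpa using hinj h hs rfl)) Bool.false_ne_true
    simp [fdomOrientation, hfalse]

theorem inter_neighbors_subset_fdomOutPorts [DecidableEq V] (hsub : S ⊆ fdomVset A w)
    (hdom : IsFDominating fdomAdj (fdomVset A w) (fdomDemand t) S)
    (hbij : Set.BijOn fdomCentre S (fdomCentres A w)) (v : V) :
    S ∩ {u | fdomAdj (Sum.inl v) u} ⊆ fdomOutPorts A w (fdomOrientation S) v := by
  rintro (x | ⟨e, i | ⟨s, j, p⟩⟩) ⟨huS, hu⟩
  · exact (not_fdomAdj_inl_inl hu).elim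
  · exact (not_fdomAdj_inl_tri hu).elim
  · obtain ⟨rfl, rfl⟩ := fdomAdj_inl_path.1 hu
    have hs : s = !fdomOrientation S e :=
      eq_not_fdomOrientation hbij.injOn
        (tri_corner_mem_of_path_outer_mem hsub hdom hbij.injOn huS)
    have hmem : e ∈ A ∧ j < w e := hsub huS
    exact mem_fdomOutPorts.2 ⟨e, hmem.1, hs ▸ rfl, j, hmem.2, hs ▸ rfl⟩

theorem le_sum_fdomOutEdges_of_isFDominating [DecidableEq V] (hfin : S.Finite)
    (hsub : S ⊆ fdomVset A w) (hcard : S.ncard ≤ ∑ e ∈ A, (2 * w e + 1))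
    (hdom : IsFDominating fdomAdj (fdomVset A w) (fdomDemand t) S) (v : V) :
    t v ≤ ∑ e ∈ fdomOutEdges A (fdomOrientation S) v, w e := by
  have hbij := bijOn_fdomCentre hfin hcard hdom
  calc t v ≤ (S ∩ {u | fdomAdj (Sum.inl v) u}).ncard :=
        hdom (Sum.inl v) trivial (inl_notMem_of_mapsTo hbij.mapsTo v)
    _ ≤ (fdomOutPorts A w (fdomOrientation S) v : Set (FDomV V)).ncard :=
        Set.ncard_le_ncard (inter_neighbors_subset_fdomOutPorts hsub hdom hbij v)
          (finite_toSet _)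
    _ = ∑ e ∈ fdomOutEdges A (fdomOrientation S) v, w e := by
        rw [Set.ncard_coe_finset, card_fdomOutPorts]

end OrientationOfDominating

section DominatingOfOrientation

variable {A : Finset (V × V)} {w : V × V → ℕ} {t : V → ℕ} {o : V × V → Bool}

/-- The dominating set prescribed by the orientation `o`: on the side of the tail of `e` it contains
the triangle vertex and the outer ends of all paths, on the other side the middle vertices. -/
def fdomSolution (A : Finset (V × V)) (w : V × V → ℕ) (o : V × V → Bool) : Finset (FDomV V) :=
  fdomTransversal A w (fun e => fdomCorner (!o e)) fun e s => if s = !o e then fdomOuter s else 1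

theorem exists_mem_fdomSolution_fdomAdj_tri {e : V × V} {i : Fin 3} (he : e ∈ A)
    (hi : tri e i ∉ fdomSolution A w o) : ∃ u ∈ fdomSolution A w o, fdomAdj (tri e i) u := by
  have hcorner : tri e (fdomCorner (!o e)) ∈ fdomSolution A w o :=
    tri_mem_fdomTransversal.2 ⟨he, rfl⟩
  exact ⟨_, hcorner, fdomAdj_tri_tri.2 ⟨rfl, fun h => hi (h ▸ hcorner)⟩⟩

theorem exists_mem_fdomSolution_fdomAdj_path {e : V × V} {s : Bool} {j : ℕ} {p : Fin 3}
    (he : e ∈ A) (hj : j < w e) (hp : path e s j p ∉ fdomSolution A w o) :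
    ∃ u ∈ fdomSolution A w o, fdomAdj (path e s j p) u := by
  by_cases hs : s = !o e
  · have houter : path e s j (fdomOuter s) ∈ fdomSolution A w o :=
      path_mem_fdomTransversal.2 ⟨he, hj, (if_pos hs).symm⟩
    have hcorner : tri e (fdomCorner s) ∈ fdomSolution A w o :=
      tri_mem_fdomTransversal.2 ⟨he, hs ▸ rfl⟩
    by_cases hmid : p = 1
    · exact ⟨_, houter, fdomAdj_path_path.2 ⟨rfl, rfl, rfl, by simp [hmid, fdomOuter_ne_one]⟩⟩
    · have hinner : p = fdomInner s :=
        eq_fdomInner_of_ne s p hmid fun h => hp (h ▸ houter)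
      exact ⟨_, hcorner, fdomAdj_comm.1 (fdomAdj_tri_path.2 ⟨rfl, rfl, hinner⟩)⟩
  · have hmiddle : path e s j 1 ∈ fdomSolution A w o :=
      path_mem_fdomTransversal.2 ⟨he, hj, (if_neg hs).symm⟩
    have hmid : p ≠ 1 := fun h => hp (h ▸ hmiddle)
    exact ⟨_, hmiddle, fdomAdj_path_path.2 ⟨rfl, rfl, rfl, by simp [hmid]⟩⟩

theorem fdomOutPorts_subset_inter_neighbors [DecidableEq V] (v : V) :
    (fdomOutPorts A w o v : Set (FDomV V)) ⊆
      fdomSolution A w o ∩ {u | fdomAdj (Sum.inl v) u} := by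
  intro u hu
  obtain ⟨e, he, hv, j, hj, rfl⟩ := mem_fdomOutPorts.1 hu
  exact ⟨path_mem_fdomTransversal.2 ⟨he, hj, (if_pos rfl).symm⟩, fdomAdj_inl_path.2 ⟨hv, rfl⟩⟩

theorem isFDominating_fdomSolution [DecidableEq V]
    (ho : ∀ v, t v ≤ ∑ e ∈ fdomOutEdges A o v, w e) :
    IsFDominating fdomAdj (fdomVset A w) (fdomDemand t) (fdomSolution A w o) := by
  have hfin (v : FDomV V) : (↑(fdomSolution A w o) ∩ {u | fdomAdj v u}).Finite :=
    (finite_toSet _).inter_of_left _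
  rintro (v | ⟨e, i | ⟨s, j, p⟩⟩) hv hvS
  · calc t v ≤ ∑ e ∈ fdomOutEdges A o v, w e := ho v
      _ = (fdomOutPorts A w o v : Set (FDomV V)).ncard := by
        rw [Set.ncard_coe_finset, card_fdomOutPorts]
      _ ≤ (↑(fdomSolution A w o) ∩ {u | fdomAdj (Sum.inl v) u}).ncard :=
        Set.ncard_le_ncard (fdomOutPorts_subset_inter_neighbors v) (hfin _)
  · exact (Set.ncard_pos (hfin _)).2 (exists_mem_fdomSolution_fdomAdj_tri hv hvS)
  · exact (Set.ncard_pos (hfin _)).2 (exists_mem_fdomSolution_fdomAdj_path hv.1 hv.2 hvS)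

end DominatingOfOrientation

theorem fdom_gadget_iff_min_outdegree_orientation_general [DecidableEq V]
    (A : Finset (V × V)) (w : V × V → ℕ) (t : V → ℕ) :
    (∃ S : Set (FDomV V), S.Finite ∧ S ⊆ fdomVset A w ∧
      S.ncard ≤ ∑ e ∈ A, (2 * w e + 1) ∧
      IsFDominating fdomAdj (fdomVset A w) (fdomDemand t) S) ↔
    (∃ o : V × V → Bool, ∀ v : V, t v ≤ ∑ e ∈ fdomOutEdges A o v, w e) := by
  constructor
  · rintro ⟨S, hfin, hsub, hcard, hdom⟩
    exact ⟨fdomOrientation S, le_sum_fdomOutEdges_of_isFDominating hfin hsub hcard hdom⟩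
  · rintro ⟨o, ho⟩
    refine ⟨fdomSolution A w o, finite_toSet _, fdomTransversal_subset_fdomVset, ?_,
      isFDominating_fdomSolution ho⟩
    rw [Set.ncard_coe_finset, fdomSolution, card_fdomTransversal]

end Gadget

theorem fdom_gadget_iff_min_outdegree_orientation
    {V : Type*} [Fintype V] [DecidableEq V]
    (A : Finset (V × V)) (w : V × V → ℕ) (t : V → ℕ)
    (hA : ∀ e ∈ A, e.1 ≠ e.2 ∧ (e.2, e.1) ∉ A)
    (hw : ∀ e ∈ A, 0 < w e) (ht : ∀ v, 0 < t v) :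
    (∃ S : Set (FDomV V), S ⊆ fdomVset A w ∧
      S.ncard ≤ ∑ e ∈ A, (2 * w e + 1) ∧
      ∀ v ∈ fdomVset A w, v ∉ S →
        fdomDemand t v ≤ (S ∩ {u | fdomAdj v u}).ncard) ↔
    (∃ o : V × V → Bool, ∀ v : V,
      t v ≤ ∑ e ∈ A.filter (fun e => (e.1 = v ∧ o e = true) ∨ (e.2 = v ∧ o e = false)), w e) :=
  (exists_congr fun _ => ⟨fun h => ⟨(finite_fdomVset A w).subset h.1, h⟩, And.right⟩).trans
    (fdom_gadget_iff_min_outdegree_orientation_general A w t)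
end

section
/- Let G=(V,E) be an undirected graph with a positive integer weight w(e) on each edge and a positive integer target t(v) for each vertex. Construct a graph H as follows: start from the vertex set V; for each edge e = {x,y} of weight γ = w(e), add two adjacent new vertices a_e and b_e, add γ new vertices each adjacent exactly to x and to a_e, and add γ new vertices each adjacent exactly to b_e and to y (all gadget vertices for distinct edges are distinct and new). Define thresholds on H: a_e and b_e get threshold γ+1, every degree-2 new vertex gets threshold 1, and every original vertex v ∈ V gets threshold t(v). Then there is a set S ⊆ V(H) with |S| ≤ |E| whose activation process in H activates all of V(H), if and only if G has an orientation in which every vertex v has weighted outdegree at least t(v). -/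
/-!
The Target Set Selection gadget construction.

The input graph `G` is given by a finite vertex type `V` and an arc set
`A : Finset (V × V)` listing each undirected edge exactly once as an ordered pair
(loopless, and never both orientations), with positive weights `w` and positive
targets `t`.

The graph `H` has vertex type `TSSV V`: original vertices `Sum.inl x`, and, for
each edge `e = (x,y)`, gadget vertices `Sum.inr (e, g)` where `g = Sum.inl false`
is `a_e`, `g = Sum.inl true` is `b_e` (these two are adjacent), and
`g = Sum.inr (side, j)` is the `j`-th degree-2 vertex on side `side`
(`false`: adjacent exactly to `x` and `a_e`; `true`: adjacent exactly to `b_e` and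
`y`).  The vertex set of `H` is `tssVset A w` (indices `j < w e`).

Thresholds: `t v` on original vertices, `w e + 1` on `a_e` and `b_e`, and `1` on
the degree-2 vertices.  `activeSeq` is the activation process.

An orientation of `G` is a function `o : V × V → Bool`; `o e = true` means edge
`e` is directed from `e.1` to `e.2`.
-/

open Finset

/-- Gadget vertices for one edge. -/
abbrev TSSGad := Bool ⊕ (Bool × ℕ)

/-- Vertices of the constructed graph `H`. -/
abbrev TSSV (V : Type*) := V ⊕ ((V × V) × TSSGad)

/-- Base adjacency relation of `H` (to be symmetrised). -/
def tssBase {V : Type*} : TSSV V → TSSV V → Prop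
  | Sum.inl x, Sum.inr (e, Sum.inr (false, _)) => x = e.1
  | Sum.inl y, Sum.inr (e, Sum.inr (true, _)) => y = e.2
  | Sum.inr (e, Sum.inl s), Sum.inr (e', Sum.inl s') => e = e' ∧ s ≠ s'
  | Sum.inr (e, Sum.inl s), Sum.inr (e', Sum.inr (s', _)) => e = e' ∧ s = s'
  | _, _ => False

/-- Adjacency in `H`. -/
def tssAdj {V : Type*} (u v : TSSV V) : Prop := tssBase u v ∨ tssBase v u

/-- The vertex set of `H`. -/
def tssVset {V : Type*} (A : Finset (V × V)) (w : V × V → ℕ) : Set (TSSV V) :=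
  {u | match u with
       | Sum.inl _ => True
       | Sum.inr (e, Sum.inl _) => e ∈ A
       | Sum.inr (e, Sum.inr (_, j)) => e ∈ A ∧ j < w e}

/-- The threshold function of `H`. -/
def tssTh {V : Type*} (w : V × V → ℕ) (t : V → ℕ) : TSSV V → ℕ
  | Sum.inl v => t v
  | Sum.inr (e, Sum.inl _) => w e + 1
  | Sum.inr (_, Sum.inr _) => 1

/-- The activation process on vertex set `Vs` starting with `S`: a vertex becomes
active once at least its threshold many of its neighbours are active. -/
def activeSeq {α : Type*} (Adj : α → α → Prop) (th : α → ℕ) (Vs : Set α)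
    (S : Set α) : ℕ → Set α
  | 0 => S
  | n + 1 => activeSeq Adj th Vs S n ∪
      {v | v ∈ Vs ∧ th v ≤ ((activeSeq Adj th Vs S n) ∩ {u | Adj v u}).ncard}

/-!
A set `B` of vertices is *blocking* if no vertex of `B` has enough neighbours outside `B` to be
activated by them; a blocking set that the process ever enters must contain a seed. The pair
`{a_e, b_e}` is blocking, so an activating set has a seed among `a_e`, `b_e` for every edge `e`, and
one with at most `|E|` seeds consists of exactly one of the two for each `e`. Direct `e` away from
the endpoint on the seeded side. If some vertex `v` then had outdegree below `t v`, `v` together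
with the unseeded sides of the edges entering `v` would be a blocking set without a seed.

Conversely, seed the `a_e` or `b_e` next to the tail of each edge: within four rounds the process
reaches the degree-2 vertices on the tail sides, the vertices of `G`, the remaining degree-2
vertices, and the remaining `a_e`, `b_e`.
-/

section Activation

variable {α : Type*} {Adj : α → α → Prop} {th : α → ℕ} {Vs S B : Set α}

theorem activeSeq_subset (hS : S ⊆ Vs) (n : ℕ) : activeSeq Adj th Vs S n ⊆ Vs := by
  induction n with
  | zero => exact hS
  | succ n ih => exact Set.union_subset ih fun _ hv => hv.1

theorem monotone_activeSeq : Monotone (activeSeq Adj th Vs S) :=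
  monotone_nat_of_le_succ fun _ => Set.subset_union_left

theorem mem_activeSeq_succ {n : ℕ} {v : α} (hS : S ⊆ Vs) (hv : v ∈ Vs)
    (hfin : (Vs ∩ {u | Adj v u}).Finite) (T : Finset α)
    (hT : ∀ u ∈ T, u ∈ activeSeq Adj th Vs S n ∧ Adj v u) (hcard : th v ≤ #T) :
    v ∈ activeSeq Adj th Vs S (n + 1) := by
  refine Or.inr ⟨hv, hcard.trans ?_⟩
  rw [← Set.ncard_coe_finset]
  exact Set.ncard_le_ncard hT (hfin.subset (Set.inter_subset_inter_left _ (activeSeq_subset hS n)))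

/-- A set of vertices each of which has, among the vertices of `Vs` outside the set, fewer
neighbours than its threshold: the activation process can enter it only through a seed. -/
def IsBlockingSet (Adj : α → α → Prop) (th : α → ℕ) (Vs B : Set α) : Prop :=
  ∀ v ∈ B, ((Vs \ B) ∩ {u | Adj v u}).encard < th v

theorem IsBlockingSet.inter_nonempty (hB : IsBlockingSet Adj th Vs B) (hS : S ⊆ Vs) {n : ℕ}
    (hn : (activeSeq Adj th Vs S n ∩ B).Nonempty) : (S ∩ B).Nonempty := by
  induction n with
  | zero => exact hn
  | succ n ih =>
    by_contra hSB
    have hdisj : ∀ u ∈ activeSeq Adj th Vs S n, u ∉ B := fun u hu huB => hSB (ih ⟨u, hu, huB⟩)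
    obtain ⟨v, hv | ⟨-, hth⟩, hvB⟩ := hn
    · exact hdisj v hv hvB
    · refine (hB v hvB).not_ge ?_
      calc (th v : ℕ∞) ≤ (activeSeq Adj th Vs S n ∩ {u | Adj v u}).ncard := by exact_mod_cast hth
        _ ≤ (activeSeq Adj th Vs S n ∩ {u | Adj v u}).encard := Set.ncard_le_encard _
        _ ≤ ((Vs \ B) ∩ {u | Adj v u}).encard := Set.encard_le_encard <|
          Set.inter_subset_inter_left _ fun u hu => ⟨activeSeq_subset hS n hu, hdisj u hu⟩

end Activation

section Gadget

variable {V : Type*}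

/-- The vertex `a_e` (`s = false`) or `b_e` (`s = true`) of `H`. -/
abbrev tssHub (e : V × V) (s : Bool) : TSSV V := Sum.inr (e, Sum.inl s)

/-- The `j`-th degree-2 vertex of `H` on side `s` of the edge `e`. -/
abbrev tssLeaf (e : V × V) (s : Bool) (j : ℕ) : TSSV V := Sum.inr (e, Sum.inr (s, j))

/-- The endpoint of the edge `e` on side `s`, i.e. the one joined to `tssHub e s` by leaves. -/
def tssEnd (e : V × V) (s : Bool) : V := cond s e.2 e.1

theorem tssAdj_inl_iff {v : V} {u : TSSV V} :
    tssAdj (Sum.inl v) u ↔ ∃ e s j, u = tssLeaf e s j ∧ tssEnd e s = v := by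
  rcases u with x | ⟨e, s | ⟨s | s, j⟩⟩ <;> simp [tssAdj, tssBase, tssEnd, eq_comm]

theorem tssAdj_hub_iff {e : V × V} {s : Bool} {u : TSSV V} :
    tssAdj (tssHub e s) u ↔ u = tssHub e (!s) ∨ ∃ j, u = tssLeaf e s j := by
  rcases u with x | ⟨e', (_ | _) | ⟨_ | _, j⟩⟩ <;> cases s <;> simp [tssAdj, tssBase, eq_comm]

theorem tssAdj_leaf_iff {e : V × V} {s : Bool} {j : ℕ} {u : TSSV V} :
    tssAdj (tssLeaf e s j) u ↔ u = tssHub e s ∨ u = Sum.inl (tssEnd e s) := by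
  rcases u with x | ⟨e', (_ | _) | ⟨_ | _, j'⟩⟩ <;> cases s <;> simp [tssAdj, tssBase, tssEnd]

variable (A : Finset (V × V)) (w : V × V → ℕ) (t : V → ℕ)

theorem finite_inr_preimage_tssVset :
    (Sum.inr ⁻¹' tssVset A w : Set ((V × V) × TSSGad)).Finite := by
  refine (A.finite_toSet.biUnion fun e _ => (Set.finite_range fun s => (e, Sum.inl s)).union
    (((Set.finite_univ (α := Bool)).prod (Set.finite_Iio (w e))).image
      fun p => (e, Sum.inr p))).subset ?_
  rintro ⟨e, s | ⟨s, j⟩⟩ h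
  · exact Set.mem_biUnion (show e ∈ A from h) (Or.inl ⟨s, rfl⟩)
  · exact Set.mem_biUnion h.1 (Or.inr ⟨(s, j), ⟨trivial, h.2⟩, rfl⟩)

theorem finite_tssVset [Finite V] : (tssVset A w).Finite := by
  refine ((Set.finite_range Sum.inl).union
    ((finite_inr_preimage_tssVset A w).image Sum.inr)).subset ?_
  rintro (v | g) h
  · exact Or.inl ⟨v, rfl⟩
  · exact Or.inr ⟨g, h, rfl⟩

theorem finite_tssVset_inter_tssAdj (v : TSSV V) : (tssVset A w ∩ {u | tssAdj v u}).Finite := by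
  have hinl : (Sum.inl ⁻¹' {u | tssAdj v u} : Set V).Finite := by
    refine Set.Subsingleton.finite fun x hx y hy => ?_
    rcases v with v | ⟨e, s | ⟨s, j⟩⟩
    · simp [tssAdj_inl_iff] at hx
    · simp [tssAdj_hub_iff] at hx
    · simp_all [tssAdj_leaf_iff]
  refine ((hinl.image Sum.inl).union
    ((finite_inr_preimage_tssVset A w).image Sum.inr)).subset ?_
  rintro (x | g) ⟨hmem, hadj⟩
  · exact Or.inl ⟨x, hadj, rfl⟩
  · exact Or.inr ⟨g, hmem, rfl⟩

/-- The degree-2 vertices of `H` on side `s` of the edge `e`. -/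
def tssLeaves (e : V × V) (s : Bool) : Finset (TSSV V) :=
  (range (w e)).map ⟨tssLeaf e s, fun i j h => by simpa using h⟩

variable {w} in
theorem mem_tssLeaves {e : V × V} {s : Bool} {u : TSSV V} :
    u ∈ tssLeaves w e s ↔ ∃ j < w e, u = tssLeaf e s j := by
  simp only [tssLeaves, mem_map, mem_range]
  exact exists_congr fun _ => and_congr_right' eq_comm

theorem card_tssLeaves (e : V × V) (s : Bool) : #(tssLeaves w e s) = w e := by
  simp [tssLeaves]

/-- The seed set of the orientation `o`: for each edge, the one of `a_e`, `b_e` on the side of its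
tail, which is side `!o e`. -/
def tssTailHubs (o : V × V → Bool) : Set (TSSV V) := (fun e => tssHub e (!o e)) '' A

theorem tssTailHubs_subset_tssVset (o : V × V → Bool) : tssTailHubs A o ⊆ tssVset A w := by
  rintro _ ⟨e, he, rfl⟩
  exact he

theorem encard_tssTailHubs (o : V × V → Bool) : (tssTailHubs A o).encard = #A := by
  have hinj : Function.Injective fun e : V × V => tssHub e (!o e) := fun e e' h => by
    simp only [Sum.inr.injEq, Prod.mk.injEq] at h
    exact h.1
  rw [tssTailHubs, hinj.encard_image, Set.encard_coe_eq_coe_finsetCard]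

/-- The stages of the activation process in `H` started from `S`. -/
abbrev tssActive (S : Set (TSSV V)) : ℕ → Set (TSSV V) :=
  activeSeq tssAdj (tssTh w t) (tssVset A w) S

section SeedsToOrientation

theorem isBlockingSet_range_tssHub (e : V × V) :
    IsBlockingSet tssAdj (tssTh w t) (tssVset A w) (Set.range (tssHub e)) := by
  rintro _ ⟨s, rfl⟩
  have hsub : (tssVset A w \ Set.range (tssHub e)) ∩ {u | tssAdj (tssHub e s) u} ⊆
      tssLeaves w e s := by
    rintro u ⟨⟨hu, hne⟩, hadj⟩
    obtain rfl | ⟨j, rfl⟩ := tssAdj_hub_iff.1 hadj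
    · exact absurd ⟨!s, rfl⟩ hne
    · exact mem_tssLeaves.2 ⟨j, hu.2, rfl⟩
  refine (Set.encard_le_encard hsub).trans_lt ?_
  rw [Set.encard_coe_eq_coe_finsetCard, card_tssLeaves]
  exact_mod_cast Nat.lt_succ_self (w e)

variable {A w t} {S : Set (TSSV V)} {m : ℕ}

theorem exists_tssHub_mem_of_activates (hS : S ⊆ tssVset A w)
    (hm : tssVset A w ⊆ tssActive A w t S m) {e : V × V} (he : e ∈ A) : ∃ s, tssHub e s ∈ S := by
  obtain ⟨_, hseed, s, rfl⟩ := (isBlockingSet_range_tssHub A w t e).inter_nonempty hS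
    ⟨tssHub e false, hm he, false, rfl⟩
  exact ⟨s, hseed⟩

theorem exists_eq_tssTailHubs_of_activates (hS : S ⊆ tssVset A w) (hcard : S.encard ≤ #A)
    (hm : tssVset A w ⊆ tssActive A w t S m) : ∃ o, S = tssTailHubs A o := by
  choose! s hs using fun e (he : e ∈ A) => exists_tssHub_mem_of_activates hS hm he
  have hsub : tssTailHubs A (fun e => !s e) ⊆ S := by
    rintro _ ⟨e, he, rfl⟩
    simpa using hs e he
  have hfin : S.Finite := Set.finite_of_encard_le_coe hcard
  have hle : S.encard ≤ (tssTailHubs A fun e => !s e).encard := by rwa [encard_tssTailHubs]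
  exact ⟨fun e => !s e, (hfin.eq_of_subset_of_encard_le' hsub hle).symm⟩

end SeedsToOrientation

section Orientation

/-- The vertex `v` together with the head sides, under `o`, of the edges of positive weight entering
`v`. Edges of weight `0` are left out because their `a_e` and `b_e` activate each other. -/
def tssHeadSides (o : V × V → Bool) (v : V) : Set (TSSV V) :=
  {u | match u with
       | Sum.inl x => x = v
       | Sum.inr (e, Sum.inl s) => 0 < w e ∧ s = o e ∧ tssEnd e s = v
       | Sum.inr (e, Sum.inr (s, _)) => 0 < w e ∧ s = o e ∧ tssEnd e s = v}

theorem disjoint_tssTailHubs_tssHeadSides (o : V × V → Bool) (v : V) :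
    Disjoint (tssTailHubs A o) (tssHeadSides w o v) := by
  refine Set.disjoint_left.2 ?_
  rintro _ ⟨e, -, rfl⟩ ⟨-, hs, -⟩
  exact Bool.not_ne_self _ hs

variable [DecidableEq V]

/-- The edges that the orientation `o` directs out of `v`. -/
def tssOutArcs (o : V × V → Bool) (v : V) : Finset (V × V) :=
  A.filter fun e => (e.1 = v ∧ o e = true) ∨ (e.2 = v ∧ o e = false)

/-- The degree-2 vertices of `H` between `v` and the seeds `tssTailHubs A o`. -/
def tssOutLeaves (o : V × V → Bool) (v : V) : Finset (TSSV V) :=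
  (tssOutArcs A o v).biUnion fun e => tssLeaves w e (!o e)

variable {A w} {o : V × V → Bool} {v : V}

theorem mem_tssOutArcs {e : V × V} : e ∈ tssOutArcs A o v ↔ e ∈ A ∧ tssEnd e (!o e) = v := by
  cases h : o e <;> simp [tssOutArcs, tssEnd, h]

theorem mem_tssOutLeaves {u : TSSV V} :
    u ∈ tssOutLeaves A w o v ↔
      ∃ e ∈ A, tssEnd e (!o e) = v ∧ ∃ j < w e, u = tssLeaf e (!o e) j := by
  simp only [tssOutLeaves, mem_biUnion, mem_tssOutArcs, mem_tssLeaves, and_assoc]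

theorem card_tssOutLeaves : #(tssOutLeaves A w o v) = ∑ e ∈ tssOutArcs A o v, w e := by
  rw [tssOutLeaves, card_biUnion]
  · simp only [card_tssLeaves]
  · intro e _ e' _ hne
    refine disjoint_left.2 fun u hu hu' => hne ?_
    obtain ⟨j, -, rfl⟩ := mem_tssLeaves.1 hu
    obtain ⟨j', -, h⟩ := mem_tssLeaves.1 hu'
    simp only [Sum.inr.injEq, Prod.mk.injEq] at h
    exact h.1

variable {t}

theorem isBlockingSet_tssHeadSides (hv : ∑ e ∈ tssOutArcs A o v, w e < t v) :
    IsBlockingSet tssAdj (tssTh w t) (tssVset A w) (tssHeadSides w o v) := by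
  have encard_lt {x : TSSV V} (F : Finset (TSSV V)) (hF : #F < tssTh w t x)
      (hsub : ∀ u ∈ tssVset A w, tssAdj x u → u ∉ tssHeadSides w o v → u ∈ F) :
      ((tssVset A w \ tssHeadSides w o v) ∩ {u | tssAdj x u}).encard < tssTh w t x := by
    refine (Set.encard_le_encard (t := F) fun u hu => hsub u hu.1.1 hu.2 hu.1.2).trans_lt ?_
    rw [Set.encard_coe_eq_coe_finsetCard]
    exact_mod_cast hF
  rintro (x | ⟨e, s | ⟨s, j⟩⟩) hx
  · obtain rfl : x = v := hx
    refine encard_lt (tssOutLeaves A w o x) (card_tssOutLeaves.trans_lt hv) fun u hu hadj hout => ?_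
    obtain ⟨e, s, j, rfl, hend⟩ := tssAdj_inl_iff.1 hadj
    obtain rfl : s = !o e :=
      Bool.eq_not_of_ne fun hs => hout ⟨Nat.zero_lt_of_lt hu.2, hs, hend⟩
    exact mem_tssOutLeaves.2 ⟨e, hu.1, hend, j, hu.2, rfl⟩
  · refine encard_lt {tssHub e (!s)} (Nat.succ_lt_succ hx.1) fun u _ hadj hout => ?_
    obtain rfl | ⟨j, rfl⟩ := tssAdj_hub_iff.1 hadj
    · exact mem_singleton_self _
    · exact absurd hx hout
  · refine encard_lt ∅ Nat.zero_lt_one fun u _ hadj hout => ?_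
    obtain rfl | rfl := tssAdj_leaf_iff.1 hadj
    · exact absurd hx hout
    · exact absurd hx.2.2 hout

theorem le_sum_tssOutArcs_of_activates {m : ℕ}
    (hm : tssVset A w ⊆ tssActive A w t (tssTailHubs A o) m) :
    t v ≤ ∑ e ∈ tssOutArcs A o v, w e := by
  by_contra! hv
  refine Set.not_disjoint_iff_nonempty_inter.2 ?_ (disjoint_tssTailHubs_tssHeadSides A w o v)
  exact (isBlockingSet_tssHeadSides hv).inter_nonempty (tssTailHubs_subset_tssVset A w o)
    ⟨Sum.inl v, hm trivial, rfl⟩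

end Orientation

section OrientationToSeeds

variable {A w t} {o : V × V → Bool}

theorem mem_tssActive_succ {n : ℕ} {v : TSSV V} (hv : v ∈ tssVset A w) (T : Finset (TSSV V))
    (hT : ∀ u ∈ T, u ∈ tssActive A w t (tssTailHubs A o) n ∧ tssAdj v u)
    (hcard : tssTh w t v ≤ #T) : v ∈ tssActive A w t (tssTailHubs A o) (n + 1) :=
  mem_activeSeq_succ (tssTailHubs_subset_tssVset A w o) hv
    (finite_tssVset_inter_tssAdj A w v) T hT hcard

theorem tssLeaf_tail_mem_tssActive_one {e : V × V} (he : e ∈ A) {j : ℕ} (hj : j < w e) :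
    tssLeaf e (!o e) j ∈ tssActive A w t (tssTailHubs A o) 1 := by
  have hseed : tssHub e (!o e) ∈ tssActive A w t (tssTailHubs A o) 0 := ⟨e, he, rfl⟩
  exact mem_tssActive_succ ⟨he, hj⟩ {tssHub e (!o e)}
    (by simpa [tssAdj_leaf_iff] using hseed) le_rfl

variable [DecidableEq V]

theorem inl_mem_tssActive_two (ho : ∀ v, t v ≤ ∑ e ∈ tssOutArcs A o v, w e) (v : V) :
    Sum.inl v ∈ tssActive A w t (tssTailHubs A o) 2 := by
  refine mem_tssActive_succ trivial (tssOutLeaves A w o v) (fun u hu => ?_)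
    ((ho v).trans_eq card_tssOutLeaves.symm)
  obtain ⟨e, he, hend, j, hj, rfl⟩ := mem_tssOutLeaves.1 hu
  exact ⟨tssLeaf_tail_mem_tssActive_one he hj, tssAdj_inl_iff.2 ⟨e, _, j, rfl, hend⟩⟩

theorem tssLeaf_mem_tssActive_three (ho : ∀ v, t v ≤ ∑ e ∈ tssOutArcs A o v, w e)
    {e : V × V} (he : e ∈ A) (s : Bool) {j : ℕ} (hj : j < w e) :
    tssLeaf e s j ∈ tssActive A w t (tssTailHubs A o) 3 :=
  mem_tssActive_succ ⟨he, hj⟩ {Sum.inl (tssEnd e s)}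
    (by simpa [tssAdj_leaf_iff] using inl_mem_tssActive_two ho (tssEnd e s)) le_rfl

theorem tssHub_mem_tssActive_four (ho : ∀ v, t v ≤ ∑ e ∈ tssOutArcs A o v, w e)
    {e : V × V} (he : e ∈ A) (s : Bool) :
    tssHub e s ∈ tssActive A w t (tssTailHubs A o) 4 := by
  have hseed : tssHub e (!o e) ∈ tssTailHubs A o := ⟨e, he, rfl⟩
  obtain rfl | rfl : s = (!o e) ∨ s = o e := by cases s <;> cases o e <;> simp
  · exact monotone_activeSeq (Nat.zero_le 4) hseed
  have hnot_leaf : tssHub e (!o e) ∉ tssLeaves w e (o e) := by simp [mem_tssLeaves]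
  refine mem_tssActive_succ he ((tssLeaves w e (o e)).cons _ hnot_leaf) (fun u hu => ?_)
    (by rw [card_cons, card_tssLeaves]; rfl)
  rw [mem_cons, mem_tssLeaves] at hu
  obtain rfl | ⟨j, hj, rfl⟩ := hu
  · exact ⟨monotone_activeSeq (Nat.zero_le 3) hseed, tssAdj_hub_iff.2 (Or.inl rfl)⟩
  · exact ⟨tssLeaf_mem_tssActive_three ho he _ hj, tssAdj_hub_iff.2 (Or.inr ⟨j, rfl⟩)⟩

theorem tssVset_subset_tssActive_four (ho : ∀ v, t v ≤ ∑ e ∈ tssOutArcs A o v, w e) :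
    tssVset A w ⊆ tssActive A w t (tssTailHubs A o) 4 := by
  rintro (v | ⟨e, s | ⟨s, j⟩⟩) hu
  · exact monotone_activeSeq (by decide : 2 ≤ 4) (inl_mem_tssActive_two ho v)
  · exact tssHub_mem_tssActive_four ho hu s
  · exact monotone_activeSeq (by decide : 3 ≤ 4) (tssLeaf_mem_tssActive_three ho hu.1 s hu.2)

end OrientationToSeeds

end Gadget

theorem tss_gadget_iff_min_outdegree_orientation_general
    {V : Type*} [DecidableEq V] (A : Finset (V × V)) (w : V × V → ℕ) (t : V → ℕ) :
    (∃ S : Set (TSSV V), S ⊆ tssVset A w ∧ S.encard ≤ #A ∧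
      ∃ j : ℕ, tssVset A w ⊆ activeSeq tssAdj (tssTh w t) (tssVset A w) S j) ↔
    (∃ o : V × V → Bool, ∀ v : V,
      t v ≤ ∑ e ∈ A.filter (fun e => (e.1 = v ∧ o e = true) ∨ (e.2 = v ∧ o e = false)), w e) := by
  constructor
  · rintro ⟨S, hS, hcard, m, hm⟩
    obtain ⟨o, rfl⟩ := exists_eq_tssTailHubs_of_activates hS hcard hm
    exact ⟨o, fun v => le_sum_tssOutArcs_of_activates hm⟩
  · rintro ⟨o, ho⟩
    exact ⟨tssTailHubs A o, tssTailHubs_subset_tssVset A w o, (encard_tssTailHubs A o).le,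
      4, tssVset_subset_tssActive_four ho⟩

theorem tss_gadget_iff_min_outdegree_orientation
    {V : Type*} [Fintype V] [DecidableEq V]
    (A : Finset (V × V)) (w : V × V → ℕ) (t : V → ℕ)
    (hA : ∀ e ∈ A, e.1 ≠ e.2 ∧ (e.2, e.1) ∉ A)
    (hw : ∀ e ∈ A, 0 < w e) (ht : ∀ v, 0 < t v) :
    (∃ S : Set (TSSV V), S ⊆ tssVset A w ∧ S.ncard ≤ A.card ∧
      ∃ j : ℕ, tssVset A w ⊆ activeSeq tssAdj (tssTh w t) (tssVset A w) S j) ↔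
    (∃ o : V × V → Bool, ∀ v : V,
      t v ≤ ∑ e ∈ A.filter (fun e => (e.1 = v ∧ o e = true) ∨ (e.2 = v ∧ o e = false)), w e) := by
  rw [← tss_gadget_iff_min_outdegree_orientation_general]
  refine exists_congr fun S => and_congr_right fun hS => and_congr_left' ?_
  rw [← ((finite_tssVset A w).subset hS).cast_ncard_eq, Nat.cast_le]
end

section
/- Let G=(V,E) be a graph, let f : V → ℕ with f(v) ≥ 1 for every vertex v, let k = max_{v∈V} f(v), assume k ≥ 2, and let ℓ ∈ ℕ. Let G' be the graph obtained from G by adding, for each vertex v ∈ V, exactly k − f(v) new pendant vertices adjacent only to v, and let ℓ' = ℓ + Σ_{v∈V}(k − f(v)). Then G has a set S ⊆ V with |S| ≤ ℓ such that every vertex v ∉ S has at least f(v) neighbours in S, if and only if G' has a set S' ⊆ V(G') with |S'| ≤ ℓ' such that every vertex of G' not in S' has at least k neighbours in S'. -/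
/-!
Reduction from `f`-Dominating Set to `k`-Dominating Set by adding pendants.

`G'` lives on the vertex type `V ⊕ (V × ℕ)`: `Sum.inl v` is the original vertex
`v` and `Sum.inr (v, j)` (for `j < k - f v`) is the `j`-th new pendant vertex
attached to `v`.  `pendVset` is the vertex set of `G'` and `pendAdj` its
adjacency relation.
-/

open Finset

/-- Adjacency of the graph `G'` obtained by attaching pendant vertices. -/
def pendAdj {V : Type*} (G : SimpleGraph V) : (V ⊕ V × ℕ) → (V ⊕ V × ℕ) → Prop
  | Sum.inl u, Sum.inl v => G.Adj u v
  | Sum.inl u, Sum.inr (v, _) => u = v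
  | Sum.inr (v, _), Sum.inl u => u = v
  | _, _ => False

/-- The vertex set of `G'`: all original vertices, and `k - f v` pendants at `v`. -/
def pendVset {V : Type*} (f : V → ℕ) (k : ℕ) : Set (V ⊕ V × ℕ) :=
  {u | match u with
       | Sum.inl _ => True
       | Sum.inr (v, j) => j < k - f v}

/-!
A pendant vertex has only one neighbour, so for `k ≥ 2` it lies in every `k`-dominating set of `G'`.
Hence every such set consists of all the pendants and a set `S ⊆ V`. It has `∑ v, (k - f v)` more
elements than `S`, and every `v ∈ V` has `k - f v` more neighbours in it than in `S`.
-/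

lemma ncard_image_inl_union_image_inr {α β : Type*} {s : Set α} {t : Set β}
    (hs : s.Finite) (ht : t.Finite) :
    (Sum.inl '' s ∪ Sum.inr '' t : Set (α ⊕ β)).ncard = s.ncard + t.ncard := by
  rw [Set.ncard_union_eq Set.disjoint_image_inl_image_inr (hs.image _) (ht.image _),
    Set.ncard_image_of_injective _ Sum.inl_injective,
    Set.ncard_image_of_injective _ Sum.inr_injective]

lemma setOf_snd_lt_eq_coe_map_sigma {ι : Type*} [Fintype ι] (g : ι → ℕ) :
    {p : ι × ℕ | p.2 < g p.1} =
      ((univ.sigma fun i ↦ range (g i)).map (Equiv.sigmaEquivProd ι ℕ).toEmbedding :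
        Finset (ι × ℕ)) := by
  ext ⟨i, j⟩
  simp

/-- `S` is a `d`-dominating set of the graph with vertex set `W` and adjacency relation `adj`.
The vertex set is a parameter because that of `G'` is a proper subset of its ambient type;
`S ⊆ W` is not part of the definition. -/
def IsDominating {α : Type*} (adj : α → α → Prop) (W : Set α) (d : α → ℕ) (S : Set α) : Prop :=
  ∀ u ∈ W, u ∉ S → d u ≤ (S ∩ {x | adj u x}).ncard

lemma IsDominating.mem_of_subsingleton {α : Type*} {adj : α → α → Prop} {W S : Set α} {d : α → ℕ}
    {u : α} (hS : IsDominating adj W d S) (hu : u ∈ W) (hadj : {x | adj u x}.Subsingleton)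
    (hd : 2 ≤ d u) : u ∈ S := by
  by_contra huS
  have hsub : (S ∩ {x | adj u x}).Subsingleton := hadj.anti Set.inter_subset_right
  have hone : (S ∩ {x | adj u x}).ncard ≤ 1 :=
    (Set.ncard_le_one hsub.finite).2 fun _ ha _ hb ↦ hsub ha hb
  have hdom : d u ≤ (S ∩ {x | adj u x}).ncard := hS u hu huS
  lia

section

variable {V : Type*} {f : V → ℕ} {k : ℕ}

/-- The vertex subset of `G'` consisting of `S ⊆ V` and all the pendant vertices. -/
def withPendants (f : V → ℕ) (k : ℕ) (S : Set V) : Set (V ⊕ V × ℕ) :=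
  Sum.inl '' S ∪ Sum.inr '' {p | p.2 < k - f p.1}

lemma inl_mem_withPendants {S : Set V} {v : V} : Sum.inl v ∈ withPendants f k S ↔ v ∈ S := by
  simp [withPendants]

lemma inr_mem_withPendants {S : Set V} {p : V × ℕ} :
    Sum.inr p ∈ withPendants f k S ↔ Sum.inr p ∈ pendVset f k := by
  simp [withPendants, pendVset]

lemma withPendants_subset_pendVset (S : Set V) : withPendants f k S ⊆ pendVset f k := by
  rintro (v | p) h
  · trivial
  · exact inr_mem_withPendants.1 h

lemma ncard_withPendants [Fintype V] (S : Set V) :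
    (withPendants f k S).ncard = S.ncard + ∑ v, (k - f v) := by
  rw [withPendants, setOf_snd_lt_eq_coe_map_sigma fun v ↦ k - f v,
    ncard_image_inl_union_image_inr S.toFinite (finite_toSet _), Set.ncard_coe_finset, card_map,
    card_sigma]
  simp only [card_range]

variable {G : SimpleGraph V}

lemma subsingleton_setOf_pendAdj_inr (p : V × ℕ) :
    {x | pendAdj G (Sum.inr p) x}.Subsingleton := by
  rintro (u | _) hu (w | _) hw
  · exact congrArg Sum.inl (Eq.trans hu (Eq.symm hw))
  · exact hw.elim
  · exact hu.elim
  · exact hu.elim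

lemma withPendants_inter_setOf_pendAdj_inl (S : Set V) (v : V) :
    withPendants f k S ∩ {x | pendAdj G (Sum.inl v) x} =
      Sum.inl '' (S ∩ {u | G.Adj v u}) ∪ Sum.inr '' ({v} ×ˢ Set.Iio (k - f v)) := by
  ext (u | ⟨u, j⟩)
  · simp [withPendants, pendAdj]
  · have hadj : pendAdj G (Sum.inl v) (Sum.inr (u, j)) ↔ u = v := eq_comm
    simp +contextual [withPendants, hadj, and_comm]

lemma ncard_withPendants_inter_setOf_pendAdj_inl [Finite V] (S : Set V) (v : V) :
    (withPendants f k S ∩ {x | pendAdj G (Sum.inl v) x}).ncard =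
      (S ∩ {u | G.Adj v u}).ncard + (k - f v) := by
  rw [withPendants_inter_setOf_pendAdj_inl,
    ncard_image_inl_union_image_inr (Set.toFinite _) (Set.toFinite _), Set.ncard_prod,
    Set.ncard_singleton, one_mul, Set.ncard_Iio_nat]

lemma isDominating_withPendants_iff [Finite V] (hub : ∀ v, f v ≤ k) {S : Set V} :
    IsDominating (pendAdj G) (pendVset f k) (fun _ ↦ k) (withPendants f k S) ↔
      IsDominating G.Adj Set.univ f S := by
  have hcount (v : V) : k ≤ (withPendants f k S ∩ {x | pendAdj G (Sum.inl v) x}).ncard ↔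
      f v ≤ (S ∩ {u | G.Adj v u}).ncard := by
    rw [ncard_withPendants_inter_setOf_pendAdj_inl]
    have hfv := hub v
    lia
  constructor
  · intro h v _ hv
    exact (hcount v).1 (h (Sum.inl v) trivial (inl_mem_withPendants.not.2 hv))
  · rintro h (v | p) hu hnot
    · exact (hcount v).2 (h v (Set.mem_univ v) (inl_mem_withPendants.not.1 hnot))
    · exact absurd (inr_mem_withPendants.2 hu) hnot

lemma eq_withPendants_of_isDominating (hk : 2 ≤ k) {S' : Set (V ⊕ V × ℕ)}
    (hsub : S' ⊆ pendVset f k)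
    (hS' : IsDominating (pendAdj G) (pendVset f k) (fun _ ↦ k) S') :
    S' = withPendants f k (Sum.inl ⁻¹' S') := by
  ext (v | p)
  · rw [inl_mem_withPendants, Set.mem_preimage]
  · rw [inr_mem_withPendants]
    exact ⟨fun h ↦ hsub h,
      fun h ↦ hS'.mem_of_subsingleton h (subsingleton_setOf_pendAdj_inr p) hk⟩

end

theorem fdominating_iff_kdominating_with_pendants_general
    {V : Type*} [Fintype V] (G : SimpleGraph V) (f : V → ℕ)
    (k : ℕ) (hub : ∀ v, f v ≤ k) (hk : 2 ≤ k) (ℓ : ℕ) :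
    (∃ S : Set V, S.ncard ≤ ℓ ∧ IsDominating G.Adj Set.univ f S) ↔
    (∃ S' : Set (V ⊕ V × ℕ), S' ⊆ pendVset f k ∧
      S'.ncard ≤ ℓ + ∑ v, (k - f v) ∧
      IsDominating (pendAdj G) (pendVset f k) (fun _ ↦ k) S') := by
  constructor
  · rintro ⟨S, hcard, hS⟩
    refine ⟨withPendants f k S, withPendants_subset_pendVset S, ?_,
      (isDominating_withPendants_iff hub).2 hS⟩
    rw [ncard_withPendants]
    gcongr
  · rintro ⟨S', hsub, hcard, hS'⟩
    obtain ⟨S, rfl⟩ : ∃ S, S' = withPendants f k S :=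
      ⟨_, eq_withPendants_of_isDominating hk hsub hS'⟩
    rw [ncard_withPendants] at hcard
    exact ⟨S, Nat.le_of_add_le_add_right hcard, (isDominating_withPendants_iff hub).1 hS'⟩

theorem fdominating_iff_kdominating_with_pendants
    {V : Type*} [Fintype V] [DecidableEq V]
    (G : SimpleGraph V) (f : V → ℕ) (hf : ∀ v, 1 ≤ f v)
    (k : ℕ) (hub : ∀ v, f v ≤ k) (hmax : ∃ v, f v = k) (hk : 2 ≤ k) (ℓ : ℕ) :
    (∃ S : Set V, S.ncard ≤ ℓ ∧
      ∀ v, v ∉ S → f v ≤ (S ∩ {u | G.Adj v u}).ncard) ↔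
    (∃ S' : Set (V ⊕ V × ℕ), S' ⊆ pendVset f k ∧
      S'.ncard ≤ ℓ + ∑ v, (k - f v) ∧
      ∀ u ∈ pendVset f k, u ∉ S' → k ≤ (S' ∩ {x | pendAdj G u x}).ncard) := by
  simpa only [IsDominating, Set.mem_univ, true_implies] using
    fdominating_iff_kdominating_with_pendants_general G f k hub hk ℓ
end

section
/- Let I be a Binary CSP instance on a graph G containing two edges {a,b} and {c,d} with a, b, c, d four distinct vertices. Construct an instance I' as follows: delete the edges {a,b} and {c,d}; add three new vertices m, a', c' and the edges {a,m}, {c,m}, {m,a'}, {m,c'}, {a',b}, {c',d}; introduce fresh colours m_{ij} for i ∈ C(a) and j ∈ C(c); set C(a') = C(a), C(c') = C(c), and C(m) = {m_{ij} : i ∈ C(a), j ∈ C(c)}; set the constraints C(m,a) = C(m,a') = {(m_{ij}, i) : i ∈ C(a), j ∈ C(c)}, C(m,c) = C(m,c') = {(m_{ij}, j) : i ∈ C(a), j ∈ C(c)}, C(a',b) = C(a,b), and C(c',d) = C(c,d); all other domains and constraints are unchanged. Then I is satisfiable if and only if I' is satisfiable. -/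
/-!
The crossover gadget for Binary CSP.

A Binary CSP instance is given by a vertex type `V`, a colour type `C`, a
symmetric edge relation `Erel`, domains `dom : V → Set C` and constraints
`con : V → V → Set (C × C)` (with `con v u` the reversed pairs of `con u v`).

Given two edges `{a,b}` and `{c,d}` on four distinct vertices, the new instance
`I'` lives on the vertex type `V ⊕ Fin 3`, where `Sum.inr 0 = m`,
`Sum.inr 1 = a'` and `Sum.inr 2 = c'`, and on the colour type `C ⊕ (C × C)`,
where `Sum.inl` embeds the old colours and `Sum.inr (i, j)` is the fresh colour
`m_{ij}`.  `crossE` is the new edge relation (edges `{a,b}`, `{c,d}` deleted;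
edges `{a,m}, {c,m}, {m,a'}, {m,c'}, {a',b}, {c',d}` added), `crossDom` the new
domains and `crossCon` the new constraints.
-/

/-- Lift a constraint on old colours to the new colour type. -/
def liftCon {C : Type*} (S : Set (C × C)) : Set ((C ⊕ C × C) × (C ⊕ C × C)) :=
  {p | ∃ i j : C, (i, j) ∈ S ∧ p = (Sum.inl i, Sum.inl j)}

/-- The constraint `{(m_{ij}, i) : i ∈ dom a, j ∈ dom c}` between `m` and `a`
(or `a'`). -/
def mConFst {V C : Type*} (dom : V → Set C) (a c : V) :
    Set ((C ⊕ C × C) × (C ⊕ C × C)) :=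
  {p | ∃ i ∈ dom a, ∃ j ∈ dom c, p = (Sum.inr (i, j), Sum.inl i)}

/-- The constraint `{(m_{ij}, j) : i ∈ dom a, j ∈ dom c}` between `m` and `c`
(or `c'`). -/
def mConSnd {V C : Type*} (dom : V → Set C) (a c : V) :
    Set ((C ⊕ C × C) × (C ⊕ C × C)) :=
  {p | ∃ i ∈ dom a, ∃ j ∈ dom c, p = (Sum.inr (i, j), Sum.inl j)}

/-- The reversal of a constraint. -/
def revCon {D : Type*} (S : Set (D × D)) : Set (D × D) := {p | (p.2, p.1) ∈ S}

/-- The edge relation of the instance `I'`. -/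
def crossE {V : Type*} (Erel : V → V → Prop) (a b c d : V) :
    (V ⊕ Fin 3) → (V ⊕ Fin 3) → Prop := fun u v =>
  (∃ x y : V, u = Sum.inl x ∧ v = Sum.inl y ∧ Erel x y ∧
    ¬(x = a ∧ y = b) ∧ ¬(x = b ∧ y = a) ∧ ¬(x = c ∧ y = d) ∧ ¬(x = d ∧ y = c)) ∨
  (u = Sum.inl a ∧ v = Sum.inr 0) ∨ (u = Sum.inr 0 ∧ v = Sum.inl a) ∨
  (u = Sum.inl c ∧ v = Sum.inr 0) ∨ (u = Sum.inr 0 ∧ v = Sum.inl c) ∨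
  (u = Sum.inr 0 ∧ v = Sum.inr 1) ∨ (u = Sum.inr 1 ∧ v = Sum.inr 0) ∨
  (u = Sum.inr 0 ∧ v = Sum.inr 2) ∨ (u = Sum.inr 2 ∧ v = Sum.inr 0) ∨
  (u = Sum.inr 1 ∧ v = Sum.inl b) ∨ (u = Sum.inl b ∧ v = Sum.inr 1) ∨
  (u = Sum.inr 2 ∧ v = Sum.inl d) ∨ (u = Sum.inl d ∧ v = Sum.inr 2)

/-- The domains of the instance `I'`. -/
def crossDom {V C : Type*} (dom : V → Set C) (a c : V) :
    (V ⊕ Fin 3) → Set (C ⊕ C × C)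
  | Sum.inl v => Sum.inl '' dom v
  | Sum.inr g =>
      if g = 0 then {p | ∃ i ∈ dom a, ∃ j ∈ dom c, p = Sum.inr (i, j)}
      else if g = 1 then Sum.inl '' dom a
      else Sum.inl '' dom c

/-- The constraints of the instance `I'`. -/
def crossCon {V C : Type*} [DecidableEq V] (dom : V → Set C)
    (con : V → V → Set (C × C)) (a b c d : V) :
    (V ⊕ Fin 3) → (V ⊕ Fin 3) → Set ((C ⊕ C × C) × (C ⊕ C × C))
  | Sum.inl x, Sum.inl y => liftCon (con x y)
  | Sum.inr g, Sum.inl x =>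
      if g = 0 then
        (if x = a then mConFst dom a c else if x = c then mConSnd dom a c else ∅)
      else if g = 1 then (if x = b then liftCon (con a b) else ∅)
      else (if x = d then liftCon (con c d) else ∅)
  | Sum.inl x, Sum.inr g =>
      if g = 0 then
        (if x = a then revCon (mConFst dom a c)
         else if x = c then revCon (mConSnd dom a c) else ∅)
      else if g = 1 then (if x = b then revCon (liftCon (con a b)) else ∅)
      else (if x = d then revCon (liftCon (con c d)) else ∅)
  | Sum.inr g, Sum.inr g' =>
      if g = 0 ∧ g' = 1 then mConFst dom a c
      else if g = 0 ∧ g' = 2 then mConSnd dom a c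
      else if g = 1 ∧ g' = 0 then revCon (mConFst dom a c)
      else if g = 2 ∧ g' = 0 then revCon (mConSnd dom a c)
      else ∅

/-!
A colouring of the gadget is rigid: `m` sees `a` and `a'` through the first index of its colour
and `c` and `c'` through the second, so `m` must carry the colour indexed by the colours of `a`
and `c`, while `a'` and `c'` copy `a` and `c`. Hence every solution of `I'` is the canonical
extension of a colouring of `V`, and on such an extension the edges `{a',b}` and `{c',d}` impose
exactly the constraints of the deleted edges `{a,b}` and `{c,d}`.
-/

/-- The solutions of the Binary CSP instance with edge relation `E`, domains `dom` and constraints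
`con`. An undirected edge is encoded by both of its orientations. -/
def IsCSPSolution {W D : Type*} (E : W → W → Prop) (dom : W → Set D) (con : W → W → Set (D × D))
    (f : W → D) : Prop :=
  (∀ v, f v ∈ dom v) ∧ ∀ u v, E u v → (f u, f v) ∈ con u v

/-- The canonical extension of a colouring of `V` to the vertices `m`, `a'`, `c'` of the gadget:
`m` receives the fresh colour indexed by the colours of `a` and `c`, which `a'` and `c'` copy. -/
def crossExtend {V C : Type*} (a c : V) (g : V → C) : V ⊕ Fin 3 → C ⊕ C × C :=
  Sum.elim (fun v => Sum.inl (g v)) ![Sum.inr (g a, g c), Sum.inl (g a), Sum.inl (g c)]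

section Constraints

variable {V C : Type*} {dom : V → Set C} {a c : V} {i j k : C}

@[simp]
lemma inl_inl_mem_liftCon {S : Set (C × C)} :
    (Sum.inl i, Sum.inl j) ∈ liftCon S ↔ (i, j) ∈ S := by
  simp [liftCon]

@[simp]
lemma inr_inl_mem_mConFst :
    (Sum.inr (i, j), Sum.inl k) ∈ mConFst dom a c ↔ i ∈ dom a ∧ j ∈ dom c ∧ k = i := by
  simp only [mConFst, Set.mem_ofPred_eq, Prod.mk.injEq, Sum.inr.injEq, Sum.inl.injEq]
  grind

@[simp]
lemma inr_inl_mem_mConSnd :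
    (Sum.inr (i, j), Sum.inl k) ∈ mConSnd dom a c ↔ i ∈ dom a ∧ j ∈ dom c ∧ k = j := by
  simp only [mConSnd, Set.mem_ofPred_eq, Prod.mk.injEq, Sum.inr.injEq, Sum.inl.injEq]
  grind

@[simp]
lemma mk_mem_revCon {D : Type*} {S : Set (D × D)} {p q : D} :
    (p, q) ∈ revCon S ↔ (q, p) ∈ S :=
  Iff.rfl

lemma forall_crossExtend_mem_crossDom_iff {g : V → C} :
    (∀ u, crossExtend a c g u ∈ crossDom dom a c u) ↔ ∀ v, g v ∈ dom v := by
  constructor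
  · intro h v
    simpa [crossExtend, crossDom] using h (Sum.inl v)
  · rintro h (v | k)
    · simp [crossExtend, crossDom, h]
    · fin_cases k <;> simp [crossExtend, crossDom, h]

lemma mk_mem_liftCon_comm {S T : Set (C × C)} (hST : ∀ i j, (i, j) ∈ S ↔ (j, i) ∈ T)
    (p q : C ⊕ C × C) : (p, q) ∈ liftCon S ↔ (q, p) ∈ liftCon T := by
  simp only [liftCon, Set.mem_ofPred_eq, Prod.mk.injEq, hST]
  grind

lemma mk_mem_crossCon_comm [DecidableEq V] {con : V → V → Set (C × C)}
    (hcon : ∀ u v p q, (p, q) ∈ con u v ↔ (q, p) ∈ con v u) (b d : V) (u v : V ⊕ Fin 3)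
    (p q : C ⊕ C × C) :
    (p, q) ∈ crossCon dom con a b c d u v ↔ (q, p) ∈ crossCon dom con a b c d v u := by
  rcases u with x | k <;> rcases v with y | l
  · exact mk_mem_liftCon_comm (hcon x y) p q
  · simp only [crossCon]
    split_ifs <;> simp
  · simp only [crossCon]
    split_ifs <;> simp
  · fin_cases k <;> fin_cases l <;> simp [crossCon]

end Constraints

section Edges

variable {V : Type*} {E : V → V → Prop} {a b c d : V}

lemma crossE_inl_inl {x y : V} :
    crossE E a b c d (Sum.inl x) (Sum.inl y) ↔
      E x y ∧ s(x, y) ≠ s(a, b) ∧ s(x, y) ≠ s(c, d) := by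
  simp [crossE, and_assoc]

lemma forall_crossE_iff {P : V ⊕ Fin 3 → V ⊕ Fin 3 → Prop} (hP : ∀ u v, P u v ↔ P v u) :
    (∀ u v, crossE E a b c d u v → P u v) ↔
      (∀ x y, E x y → s(x, y) ≠ s(a, b) → s(x, y) ≠ s(c, d) → P (.inl x) (.inl y)) ∧
      P (.inr 0) (.inl a) ∧ P (.inr 0) (.inr 1) ∧ P (.inr 0) (.inl c) ∧ P (.inr 0) (.inr 2) ∧
      P (.inr 1) (.inl b) ∧ P (.inr 2) (.inl d) := by
  constructor
  · refine fun h => ⟨fun x y hxy hab hcd => h _ _ (crossE_inl_inl.2 ⟨hxy, hab, hcd⟩),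
      h _ _ ?_, h _ _ ?_, h _ _ ?_, h _ _ ?_, h _ _ ?_, h _ _ ?_⟩ <;> simp [crossE]
  · rintro ⟨hold, hma, hma', hmc, hmc', hb, hd⟩ u v huv
    by_cases hinl : ∃ x y, u = .inl x ∧ v = .inl y
    · obtain ⟨x, y, rfl, rfl⟩ := hinl
      obtain ⟨hxy, hab, hcd⟩ := crossE_inl_inl.1 huv
      exact hold x y hxy hab hcd
    · grind [crossE]

lemma forall_edge_iff_of_symm {P : V → V → Prop} (hP : ∀ u v, P u v ↔ P v u)
    (hab : E a b) (hcd : E c d) :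
    (∀ x y, E x y → P x y) ↔
      (∀ x y, E x y → s(x, y) ≠ s(a, b) → s(x, y) ≠ s(c, d) → P x y) ∧ P a b ∧ P c d := by
  refine ⟨fun h => ⟨fun x y hxy _ _ => h x y hxy, h a b hab, h c d hcd⟩, ?_⟩
  rintro ⟨hold, hPab, hPcd⟩ x y hxy
  by_cases hxab : s(x, y) = s(a, b)
  · grind
  by_cases hxcd : s(x, y) = s(c, d)
  · grind
  exact hold x y hxy hxab hxcd

end Edges

section Solutions

variable {V C : Type*} [DecidableEq V] {E : V → V → Prop} {dom : V → Set C}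
  {con : V → V → Set (C × C)} {a b c d : V}

lemma isCSPSolution_cross_iff (hcon : ∀ u v p q, (p, q) ∈ con u v ↔ (q, p) ∈ con v u)
    (hac : a ≠ c) {f : V ⊕ Fin 3 → C ⊕ C × C} :
    IsCSPSolution (crossE E a b c d) (crossDom dom a c) (crossCon dom con a b c d) f ↔
      (∀ u, f u ∈ crossDom dom a c u) ∧
      (∀ x y, E x y → s(x, y) ≠ s(a, b) → s(x, y) ≠ s(c, d) →
        (f (.inl x), f (.inl y)) ∈ liftCon (con x y)) ∧
      (f (.inr 0), f (.inl a)) ∈ mConFst dom a c ∧ (f (.inr 0), f (.inr 1)) ∈ mConFst dom a c ∧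
      (f (.inr 0), f (.inl c)) ∈ mConSnd dom a c ∧ (f (.inr 0), f (.inr 2)) ∈ mConSnd dom a c ∧
      (f (.inr 1), f (.inl b)) ∈ liftCon (con a b) ∧
      (f (.inr 2), f (.inl d)) ∈ liftCon (con c d) := by
  rw [IsCSPSolution, forall_crossE_iff fun u v => mk_mem_crossCon_comm hcon b d u v _ _]
  simp [crossCon, hac.symm]

lemma isCSPSolution_crossExtend_iff (hcon : ∀ u v p q, (p, q) ∈ con u v ↔ (q, p) ∈ con v u)
    (hac : a ≠ c) (hab : E a b) (hcd : E c d) {g : V → C} :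
    IsCSPSolution (crossE E a b c d) (crossDom dom a c) (crossCon dom con a b c d)
      (crossExtend a c g) ↔ IsCSPSolution E dom con g := by
  rw [isCSPSolution_cross_iff hcon hac, forall_crossExtend_mem_crossDom_iff, IsCSPSolution,
    forall_edge_iff_of_symm (fun u v => hcon u v (g u) (g v)) hab hcd]
  refine and_congr_right fun hdom => ?_
  simp [crossExtend, hdom]

lemma IsCSPSolution.exists_eq_crossExtend (hac : a ≠ c) {f : V ⊕ Fin 3 → C ⊕ C × C}
    (hf : IsCSPSolution (crossE E a b c d) (crossDom dom a c) (crossCon dom con a b c d) f) :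
    ∃ g : V → C, f = crossExtend a c g := by
  have hma : (f (.inr 0), f (.inl a)) ∈ mConFst dom a c := by
    simpa [crossCon] using hf.2 (.inr 0) (.inl a) (by simp [crossE])
  have hma' : (f (.inr 0), f (.inr 1)) ∈ mConFst dom a c := by
    simpa [crossCon] using hf.2 (.inr 0) (.inr 1) (by simp [crossE])
  have hmc : (f (.inr 0), f (.inl c)) ∈ mConSnd dom a c := by
    simpa [crossCon, hac.symm] using hf.2 (.inr 0) (.inl c) (by simp [crossE])
  have hmc' : (f (.inr 0), f (.inr 2)) ∈ mConSnd dom a c := by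
    simpa [crossCon] using hf.2 (.inr 0) (.inr 2) (by simp [crossE])
  choose g _ hg using fun v => hf.1 (Sum.inl v)
  obtain ⟨i, -, j, -, hm⟩ := hf.1 (Sum.inr 0)
  obtain ⟨i', -, ha'⟩ := hf.1 (Sum.inr 1)
  obtain ⟨j', -, hc'⟩ := hf.1 (Sum.inr 2)
  rw [hm, ← hg, inr_inl_mem_mConFst] at hma
  rw [hm, ← ha', inr_inl_mem_mConFst] at hma'
  rw [hm, ← hg, inr_inl_mem_mConSnd] at hmc
  rw [hm, ← hc', inr_inl_mem_mConSnd] at hmc'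
  obtain ⟨-, -, rfl⟩ := hma
  obtain ⟨-, -, rfl⟩ := hma'
  obtain ⟨-, -, rfl⟩ := hmc
  obtain ⟨-, -, rfl⟩ := hmc'
  refine ⟨g, funext ?_⟩
  rintro (v | k)
  · exact (hg v).symm
  · fin_cases k
    · exact hm
    · exact ha'.symm
    · exact hc'.symm

theorem crossover_gadget_satisfiable_iff_general
    (hcon : ∀ u v p q, (p, q) ∈ con u v ↔ (q, p) ∈ con v u)
    (hac : a ≠ c) (hab : E a b) (hcd : E c d) :
    (∃ g, IsCSPSolution E dom con g) ↔
      ∃ f, IsCSPSolution (crossE E a b c d) (crossDom dom a c) (crossCon dom con a b c d) f := by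
  constructor
  · rintro ⟨g, hg⟩
    exact ⟨crossExtend a c g, (isCSPSolution_crossExtend_iff hcon hac hab hcd).2 hg⟩
  · rintro ⟨f, hf⟩
    obtain ⟨g, rfl⟩ := hf.exists_eq_crossExtend hac
    exact ⟨g, (isCSPSolution_crossExtend_iff hcon hac hab hcd).1 hf⟩

end Solutions

theorem crossover_gadget_satisfiable_iff
    {V C : Type*} [DecidableEq V]
    (Erel : V → V → Prop) (hEsym : ∀ u v, Erel u v → Erel v u)
    (dom : V → Set C) (con : V → V → Set (C × C))
    (hconsym : ∀ u v p q, (p, q) ∈ con u v ↔ (q, p) ∈ con v u)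
    (a b c d : V)
    (hab : a ≠ b) (hac : a ≠ c) (had : a ≠ d)
    (hbc : b ≠ c) (hbd : b ≠ d) (hcd : c ≠ d)
    (heab : Erel a b) (hecd : Erel c d) :
    (∃ g : V → C, (∀ v, g v ∈ dom v) ∧
      ∀ u v, Erel u v → (g u, g v) ∈ con u v) ↔
    (∃ g' : (V ⊕ Fin 3) → C ⊕ C × C,
      (∀ u, g' u ∈ crossDom dom a c u) ∧
      ∀ u v, crossE Erel a b c d u v →
        (g' u, g' v) ∈ crossCon dom con a b c d u v) :=
  crossover_gadget_satisfiable_iff_general hconsym hac heab hecd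
end

section
/- Let I be a Binary CSP instance on a graph G and let v be a vertex of G with incident edges e_1 = {v,w_1}, …, e_d = {v,w_d}. Let T be any tree on new vertices v_1, …, v_p (disjoint from G) and let σ : {1,…,d} → {v_1,…,v_p} be any assignment of the incident edges of v to vertices of T. Construct I' from I as follows: delete v; add the tree T, where each vertex v_j has domain C(v_j) = C(v) and every tree edge {v_j, v_{j'}} carries the equality constraint {(c,c) : c ∈ C(v)}; and replace each edge e_i by the edge {σ(i), w_i} with constraint C(σ(i), w_i) = C(v, w_i); all other domains and constraints are unchanged. Then I is satisfiable if and only if I' is satisfiable. -/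
/-!
The vertex-splitting gadget for Binary CSP: a vertex `v` is replaced by a tree
`T` of copies of `v` (each with domain `dom v`, tree edges carrying the equality
constraint), and each edge `{v, w}` incident to `v` is replaced by the edge
`{σ w, w}` carrying the original constraint `con v w`, where `σ` assigns each
incident edge (equivalently, each neighbour `w` of `v`) to a tree vertex.

A Binary CSP instance is given by a vertex type `V`, a colour type `C`, a
symmetric irreflexive edge relation `Erel`, domains `dom : V → Set C` and
constraints `con : V → V → Set (C × C)` (with `con w u` the reversed pairs of
`con u w`).  The new instance lives on `V ⊕ Fin p` with `v` deleted; a solution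
of the new instance is a colouring `g'` respecting all (remaining and new)
domains and constraints.
-/

/-!
The equality constraints propagate along paths of the tree, so a solution of the split instance
gives all copies of `v` one common colour; contracting the copies back to `v` turns it into a
solution of the original instance. Conversely, every copy of `v` can take over the colour of `v`.
-/

theorem eq_of_reachable_of_forall_adj {ι α : Type*} {T : SimpleGraph ι} {f : ι → α}
    (hf : ∀ i j, T.Adj i j → f i = f j) {i j : ι} (hij : T.Reachable i j) : f i = f j := by
  obtain ⟨walk⟩ := hij
  induction walk with
  | nil => rfl
  | cons hadj _ ih => exact (hf _ _ hadj).trans ih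

/-- A binary constraint satisfaction problem on the vertices `V` with colours `C`. Only the values
of `con` on edges are meaningful, and `con u w`, `con w u` both record the constraint on `{u, w}`,
so they are required to be reverses of each other. -/
structure BinaryCSP (V C : Type*) where
  graph : SimpleGraph V
  dom : V → Set C
  con : V → V → Set (C × C)
  con_symm : ∀ {u w a b}, graph.Adj u w → (a, b) ∈ con u w → (b, a) ∈ con w u

namespace BinaryCSP

variable {V C ι : Type*}

/-- A solution: a colouring that respects all domains and all constraints on edges. -/
def IsSolution (I : BinaryCSP V C) (g : V → C) : Prop :=
  (∀ u, g u ∈ I.dom u) ∧ ∀ u w, I.graph.Adj u w → (g u, g w) ∈ I.con u w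

/-- An instance is satisfiable if it has a solution. -/
def Satisfiable (I : BinaryCSP V C) : Prop :=
  ∃ g, I.IsSolution g

/-- The graph obtained from `G` by replacing `v` with the graph `T`, where the edge from `v` to `w`
is reattached to `σ w`. To keep the vertex type `V ⊕ ι`, the deleted vertex `v` stays behind as an
isolated vertex. -/
def splitGraph (G : SimpleGraph V) (v : V) (T : SimpleGraph ι) (σ : V → ι) :
    SimpleGraph (V ⊕ ι) where
  Adj
    | .inl u, .inl w => u ≠ v ∧ w ≠ v ∧ G.Adj u w
    | .inl w, .inr i => G.Adj v w ∧ σ w = i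
    | .inr i, .inl w => G.Adj v w ∧ σ w = i
    | .inr i, .inr j => T.Adj i j
  symm := ⟨by
    rintro (u | i) (w | j) h
    · exact ⟨h.2.1, h.1, h.2.2.symm⟩
    · exact h
    · exact h
    · exact T.adj_symm h⟩
  loopless := ⟨by
    rintro (u | i) h
    · exact G.irrefl h.2.2
    · exact T.irrefl h⟩

/-- The vertex-splitting gadget: `v` is replaced by copies of itself, indexed by the vertices of `T`
and joined along `T` by equality constraints, and the edge from `v` to `w` is reattached to the copy
`σ w`. The deleted vertex `v` stays behind isolated, with every colour allowed. -/
def split (I : BinaryCSP V C) (v : V) (T : SimpleGraph ι) (σ : V → ι) : BinaryCSP (V ⊕ ι) C where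
  graph := splitGraph I.graph v T σ
  dom
    | .inl u => {c | u ≠ v → c ∈ I.dom u}
    | .inr _ => I.dom v
  con
    | .inl u, .inl w => I.con u w
    | .inl w, .inr _ => I.con w v
    | .inr _, .inl w => I.con v w
    | .inr _, .inr _ => {q | q.1 = q.2 ∧ q.1 ∈ I.dom v}
  con_symm := by
    rintro (u | i) (w | j) a b hadj hab
    · exact I.con_symm hadj.2.2 hab
    · exact I.con_symm hadj.1.symm hab
    · exact I.con_symm hadj.1 hab
    · obtain ⟨heq, ha⟩ : a = b ∧ a ∈ I.dom v := hab
      exact ⟨heq.symm, heq ▸ ha⟩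

theorem isSolution_split_iff {I : BinaryCSP V C} {v : V} {T : SimpleGraph ι} {σ : V → ι}
    {g : V ⊕ ι → C} :
    (I.split v T σ).IsSolution g ↔
      (∀ u, u ≠ v → g (.inl u) ∈ I.dom u) ∧
      (∀ i, g (.inr i) ∈ I.dom v) ∧
      (∀ u w, u ≠ v → w ≠ v → I.graph.Adj u w → (g (.inl u), g (.inl w)) ∈ I.con u w) ∧
      (∀ i j, T.Adj i j → g (.inr i) = g (.inr j) ∧ g (.inr i) ∈ I.dom v) ∧
      (∀ w, I.graph.Adj v w → (g (.inr (σ w)), g (.inl w)) ∈ I.con v w) := by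
  constructor
  · rintro ⟨hdom, hcon⟩
    exact ⟨fun u => hdom (.inl u), fun i => hdom (.inr i),
      fun u w hu hw huw => hcon (.inl u) (.inl w) ⟨hu, hw, huw⟩,
      fun i j => hcon (.inr i) (.inr j),
      fun w hw => hcon (.inr (σ w)) (.inl w) ⟨hw, rfl⟩⟩
  · rintro ⟨hdom, hdom_copy, hcon, hcon_copy, hcon_attach⟩
    refine ⟨Sum.rec hdom hdom_copy, ?_⟩
    rintro (u | i) (w | j) hadj
    · exact hcon u w hadj.1 hadj.2.1 hadj.2.2
    · obtain ⟨hu, rfl⟩ := hadj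
      exact I.con_symm hu (hcon_attach u hu)
    · obtain ⟨hw, rfl⟩ := hadj
      exact hcon_attach w hw
    · exact hcon_copy i j hadj

theorem IsSolution.split {I : BinaryCSP V C} {g : V → C} (hg : I.IsSolution g) (v : V)
    (T : SimpleGraph ι) (σ : V → ι) :
    (I.split v T σ).IsSolution (Sum.elim g fun _ => g v) :=
  isSolution_split_iff.2 ⟨fun u _ => hg.1 u, fun _ => hg.1 v, fun u w _ _ => hg.2 u w,
    fun _ _ _ => ⟨rfl, hg.1 v⟩, hg.2 v⟩

theorem IsSolution.update_of_split [DecidableEq V] {I : BinaryCSP V C} {v : V}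
    {T : SimpleGraph ι} {σ : V → ι} {g : V ⊕ ι → C} (hg : (I.split v T σ).IsSolution g)
    (hT : T.Preconnected) (i : ι) :
    I.IsSolution (Function.update (g ∘ .inl) v (g (.inr i))) := by
  obtain ⟨hdom, hdom_copy, hcon, hcon_copy, hcon_attach⟩ := isSolution_split_iff.1 hg
  have hcon_center (w : V) (hw : I.graph.Adj v w) : (g (.inr i), g (.inl w)) ∈ I.con v w := by
    have hcopies : g (.inr i) = g (.inr (σ w)) :=
      eq_of_reachable_of_forall_adj (f := g ∘ .inr) (fun j k hjk => (hcon_copy j k hjk).1)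
        (hT i (σ w))
    exact hcopies ▸ hcon_attach w hw
  constructor
  · intro u
    obtain rfl | hu := eq_or_ne u v
    · simpa using hdom_copy i
    · simpa [hu] using hdom u hu
  · intro u w huw
    obtain rfl | hu := eq_or_ne u v
    · simpa [huw.ne'] using hcon_center w huw
    obtain rfl | hw := eq_or_ne w v
    · simpa [hu] using I.con_symm huw.symm (hcon_center u huw.symm)
    · simpa [hu, hw] using hcon u w hu hw huw

end BinaryCSP

theorem vertex_splitting_satisfiable_iff_general {V C ι : Type*} (I : BinaryCSP V C) (v : V)
    {T : SimpleGraph ι} (hT : T.Preconnected) (σ : V → ι) :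
    I.Satisfiable ↔ (I.split v T σ).Satisfiable := by
  classical
  exact ⟨fun ⟨_, hg⟩ => ⟨_, hg.split v T σ⟩, fun ⟨_, hg⟩ => ⟨_, hg.update_of_split hT (σ v)⟩⟩

theorem vertex_splitting_satisfiable_iff
    {V C : Type*} [DecidableEq V]
    (Erel : V → V → Prop) (hEsym : ∀ u w, Erel u w → Erel w u)
    (hEirr : ∀ u, ¬ Erel u u)
    (dom : V → Set C) (con : V → V → Set (C × C))
    (hconsym : ∀ u w p q, (p, q) ∈ con u w ↔ (q, p) ∈ con w u)
    (v : V) (p : ℕ) (T : SimpleGraph (Fin p)) (hT : T.IsTree)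
    (σ : V → Fin p) :
    (∃ g : V → C, (∀ u, g u ∈ dom u) ∧
      ∀ u w, Erel u w → (g u, g w) ∈ con u w) ↔
    (∃ g' : (V ⊕ Fin p) → C,
      (∀ u : V, u ≠ v → g' (Sum.inl u) ∈ dom u) ∧
      (∀ i : Fin p, g' (Sum.inr i) ∈ dom v) ∧
      (∀ u w : V, u ≠ v → w ≠ v → Erel u w →
        (g' (Sum.inl u), g' (Sum.inl w)) ∈ con u w) ∧
      (∀ i i' : Fin p, T.Adj i i' →
        g' (Sum.inr i) = g' (Sum.inr i') ∧ g' (Sum.inr i) ∈ dom v) ∧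
      (∀ w : V, Erel v w → (g' (Sum.inr (σ w)), g' (Sum.inl w)) ∈ con v w)) := by
  let I : BinaryCSP V C :=
    ⟨⟨Erel, ⟨hEsym⟩, ⟨hEirr⟩⟩, dom, con, fun _ => (hconsym _ _ _ _).1⟩
  exact (vertex_splitting_satisfiable_iff_general I v hT.connected.preconnected σ).trans
    (exists_congr fun _ => BinaryCSP.isSolution_split_iff)
end
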